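/- arXiv:math/0301063 — 4 statements merged into one kernel-verified Lean document; each statement's English description precedes it below -/
import Mathlib

section
/- Under Assumptions (H0)–(H3), for every p̲ ∈ 𝒪 and every ζ̲̌ = (τ̲̌, η̲̌, γ̲̌) ∈ ℝ^{d+1} with ζ̲̌ ≠ 0 and γ̲̌ > 0, there exist a neighborhood Ω of (p̲, ζ̲̌, 0) in ℝ^M × ℝ^{d+1} × ℝ and a C^∞ map Π : Ω → M_{2N}(ℂ) such that for every (p, ζ̌, ρ) ∈ Ω with ρ > 0, Π(p, ζ̌, ρ) is the projection of ℂ^{2N} onto E₋(p, ρζ̌) along E₊(p, ρζ̌); in particular the stable bundle (p, ζ̌, ρ) ↦ E₋(p, ρζ̌) extends smoothly across ρ = 0 at points where γ̌ > 0. -/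
open Matrix Complex
open scoped ContDiff

noncomputable section

/-- Real matrix mapped to a complex matrix. -/
def cmap {N : ℕ} (A : Matrix (Fin N) (Fin N) ℝ) : Matrix (Fin N) (Fin N) ℂ :=
  A.map (fun x => (x : ℂ))

/-- Frequency variable `ζ = (τ, η, γ) ∈ ℝ × ℝ^{d-1} × ℝ` (here `d = m + 1`). -/
abbrev Freq (m : ℕ) := ℝ × (Fin m → ℝ) × ℝ

/-- The block `𝒜(p, ζ)`. -/
def calA {N m : ℕ} (A : Fin (m + 1) → Matrix (Fin N) (Fin N) ℝ)
    (B : Fin (m + 1) → Fin (m + 1) → Matrix (Fin N) (Fin N) ℝ) (ζ : Freq m) :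
    Matrix (Fin N) (Fin N) ℂ :=
  (cmap (B (Fin.last m) (Fin.last m)))⁻¹ *
    (cmap (A (Fin.last m)) -
      ∑ j : Fin m, (Complex.I * (ζ.2.1 j : ℂ)) •
        (cmap (B j.castSucc (Fin.last m)) + cmap (B (Fin.last m) j.castSucc)))

/-- The block `ℳ(p, ζ)`. -/
def calM {N m : ℕ} (A : Fin (m + 1) → Matrix (Fin N) (Fin N) ℝ)
    (B : Fin (m + 1) → Fin (m + 1) → Matrix (Fin N) (Fin N) ℝ) (ζ : Freq m) :
    Matrix (Fin N) (Fin N) ℂ :=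
  (cmap (B (Fin.last m) (Fin.last m)))⁻¹ *
    ((Complex.I * (ζ.1 : ℂ) + (ζ.2.2 : ℂ)) • (1 : Matrix (Fin N) (Fin N) ℂ) +
      ∑ j : Fin m, (Complex.I * (ζ.2.1 j : ℂ)) • cmap (A j.castSucc) +
      ∑ j : Fin m, ∑ k : Fin m, ((ζ.2.1 j * ζ.2.1 k : ℝ) : ℂ) • cmap (B j.castSucc k.castSucc))

/-- The full `2N × 2N` matrix `𝒢(p, ζ) = [[0, Id], [ℳ, 𝒜]]`. -/
def calG {N m : ℕ} (A : Fin (m + 1) → Matrix (Fin N) (Fin N) ℝ)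
    (B : Fin (m + 1) → Fin (m + 1) → Matrix (Fin N) (Fin N) ℝ) (ζ : Freq m) :
    Matrix (Fin N ⊕ Fin N) (Fin N ⊕ Fin N) ℂ :=
  Matrix.fromBlocks 0 1 (calM A B ζ) (calA A B ζ)

/-- The generalized eigenspace of `f` for eigenvalues of negative real part. -/
def stableSubspace {E : Type*} [AddCommGroup E] [Module ℂ E] (f : Module.End ℂ E) :
    Submodule ℂ E :=
  ⨆ μ ∈ {μ : ℂ | μ.re < 0}, f.maxGenEigenspace μ

/-- The generalized eigenspace of `f` for eigenvalues of positive real part. -/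
def unstableSubspace {E : Type*} [AddCommGroup E] [Module ℂ E] (f : Module.End ℂ E) :
    Submodule ℂ E :=
  ⨆ μ ∈ {μ : ℂ | 0 < μ.re}, f.maxGenEigenspace μ

/-- (H0): the coefficients are `C^∞` functions on `𝒪`. -/
def HypH0 {M N m : ℕ} (𝒪 : Set (Fin M → ℝ))
    (A : Fin (m + 1) → (Fin M → ℝ) → Matrix (Fin N) (Fin N) ℝ)
    (B : Fin (m + 1) → Fin (m + 1) → (Fin M → ℝ) → Matrix (Fin N) (Fin N) ℝ) : Prop :=
  (∀ j i k, ContDiffOn ℝ ∞ (fun p => A j p i k) 𝒪) ∧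
    (∀ j l i k, ContDiffOn ℝ ∞ (fun p => B j l p i k) 𝒪)

/-- (H1): for `p ∈ 𝒪` and `ξ ≠ 0`, the eigenvalues of `Σ ξ_j A_j(p)` are real and
semisimple, with multiplicities independent of `(p, ξ)`. -/
def HypH1 {M N m : ℕ} (𝒪 : Set (Fin M → ℝ))
    (A : Fin (m + 1) → (Fin M → ℝ) → Matrix (Fin N) (Fin N) ℝ) : Prop :=
  ∃ mult : Multiset ℕ, ∀ p ∈ 𝒪, ∀ ξ : Fin (m + 1) → ℝ, ξ ≠ 0 →
    (∀ μ ∈ spectrum ℂ (cmap (∑ j, ξ j • A j p)), μ.im = 0) ∧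
    (∀ μ : ℂ, Module.End.eigenspace (Matrix.toLin' (cmap (∑ j, ξ j • A j p))) μ =
      Module.End.maxGenEigenspace (Matrix.toLin' (cmap (∑ j, ξ j • A j p))) μ) ∧
    (((cmap (∑ j, ξ j • A j p)).charpoly.roots.dedup.map
        fun μ => (cmap (∑ j, ξ j • A j p)).charpoly.roots.count μ) = mult)

/-- (H2): uniform parabolicity. -/
def HypH2 {M N m : ℕ} (𝒪 : Set (Fin M → ℝ))
    (A : Fin (m + 1) → (Fin M → ℝ) → Matrix (Fin N) (Fin N) ℝ)
    (B : Fin (m + 1) → Fin (m + 1) → (Fin M → ℝ) → Matrix (Fin N) (Fin N) ℝ) : Prop :=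
  ∃ c > (0 : ℝ), ∀ p ∈ 𝒪, ∀ ξ : Fin (m + 1) → ℝ,
    ∀ μ ∈ spectrum ℂ
      ((∑ j, (Complex.I * (ξ j : ℂ)) • cmap (A j p)) +
        ∑ j, ∑ k, ((ξ j * ξ k : ℝ) : ℂ) • cmap (B j k p)),
      c * ∑ j, (ξ j) ^ 2 ≤ μ.re

/-- (H3): noncharacteristic boundary. -/
def HypH3 {M N m : ℕ} (𝒪 : Set (Fin M → ℝ))
    (A : Fin (m + 1) → (Fin M → ℝ) → Matrix (Fin N) (Fin N) ℝ) : Prop :=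
  ∀ p ∈ 𝒪, (A (Fin.last m) p).det ≠ 0

end

/-!
Write `𝒢(p, ρ ζ̌) = [[0, 1], [ρ M, 𝒜]]` with `M` and `𝒜` smooth up to `ρ = 0`. If `K` and `L` solve
the Riccati equation `M + 𝒜 K = ρ K²` and the Sylvester equation `L (𝒜 - ρ K) - ρ K L = 1`, then the
matrix `[[1, L], [ρ K, 1 + ρ K L]]` conjugates `diag (ρ K, 𝒜 - ρ K)` to `𝒢`. Both equations are
solvable analytically near `ρ = 0` by the implicit function theorem, since `𝒜` is invertible there.
At `ρ = 0` neither `K` nor `𝒜` has a purely imaginary eigenvalue: for `𝒜 = B_{d,d}⁻¹ A_d` this is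
parabolicity together with `det A_d ≠ 0`, and for `K = -A_d⁻¹ ((iτ + γ) + Σ i η_j A_j)` it is
hyperbolicity together with `γ ≠ 0`. The positive factor in `ρ K` does not change its stable
subspace, so the stable projections of `K` and `𝒜 - ρ K` provide the extension.

The stable projection of a matrix `X` without purely imaginary eigenvalues is `(1 - Y⁻¹ X) / 2`,
where `Y` is the root of `Y² = X²` with spectrum in the right half-plane; it depends analytically
on `X`, again by the implicit function theorem.
-/

section GeneralizedEigenspaces

variable {K V : Type*} [Field K] [AddCommGroup V] [Module K V] {f : Module.End K V}

theorem le_biSup_maxGenEigenspace_of_mem_invtSubmodule [IsAlgClosed K] [FiniteDimensional K V]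
    {S : Submodule K V} (hS : S ∈ f.invtSubmodule) {s : Set K}
    (hs : ∀ μ, ∀ v ∈ S, v ≠ 0 → f v = μ • v → μ ∈ s) :
    S ≤ ⨆ μ ∈ s, f.maxGenEigenspace μ := by
  rw [← S.range_subtype, LinearMap.range_eq_map,
    ← Module.End.iSup_maxGenEigenspace_eq_top (f.restrict hS), Submodule.map_iSup]
  refine iSup_le fun μ => ?_
  by_cases hμ : μ ∈ s
  · refine le_iSup₂_of_le μ hμ (Submodule.map_le_iff_le_comap.2 ?_)
    exact (Module.End.genEigenspace_restrict f S ⊤ μ hS).le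
  · suffices Module.End.maxGenEigenspace (f.restrict hS) μ = ⊥ by simp [this]
    by_contra hne
    have hasEigenvalue : Module.End.HasEigenvalue (f.restrict hS) μ :=
      Module.End.HasUnifEigenvalue.lt zero_lt_one hne
    obtain ⟨v, hv⟩ := hasEigenvalue.exists_hasEigenvector
    exact hμ (hs μ v v.2 (by simpa using hv.2) (congrArg Subtype.val hv.apply_eq_smul))

theorem mem_of_mem_biSup_maxGenEigenspace {s : Set K} {μ : K} {v : V} (hv₀ : v ≠ 0)
    (hfv : f v = μ • v) (hv : v ∈ ⨆ ν ∈ s, f.maxGenEigenspace ν) : μ ∈ s := by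
  by_contra hμ
  have hvμ : v ∈ f.maxGenEigenspace μ :=
    Module.End.mem_maxGenEigenspace f μ v |>.2 ⟨1, by simp [hfv]⟩
  have hdisj := f.independent_maxGenEigenspace.disjoint_biSup hμ
  exact hv₀ (Submodule.disjoint_def.1 hdisj v hvμ hv)

theorem biSup_maxGenEigenspace_mem_invtSubmodule (s : Set K) :
    ⨆ μ ∈ s, f.maxGenEigenspace μ ∈ f.invtSubmodule := by
  rw [Module.End.mem_invtSubmodule]
  refine iSup₂_le fun μ hμ v hv => ?_
  exact Submodule.mem_iSup_of_mem μ (Submodule.mem_iSup_of_mem hμ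
    (Module.End.mapsTo_maxGenEigenspace_of_comm (Commute.refl f) μ hv))

end GeneralizedEigenspaces

section StableProjection

theorem eq_of_isCompl_of_le_of_disjoint {α : Type*} [Lattice α] [BoundedOrder α]
    [IsModularLattice α] {a b a' b' : α} (hab : IsCompl a b) (ha : a ≤ a') (hb : b ≤ b')
    (hab' : Disjoint a' b') : a = a' :=
  eq_of_le_of_inf_le_of_le_sup ha ((hab'.mono_right hb).eq_bot.le.trans bot_le)
    (hab.sup_eq_top.ge.trans' le_top)

theorem disjoint_stableSubspace_unstableSubspace {V : Type*} [AddCommGroup V] [Module ℂ V]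
    (f : Module.End ℂ V) : Disjoint (stableSubspace f) (unstableSubspace f) :=
  f.independent_maxGenEigenspace.disjoint_biSup_biSup
    (Set.disjoint_left.2 fun μ (hneg : μ.re < 0) hpos => lt_asymm hneg hpos)

theorem isCompl_stableSubspace_unstableSubspace {V : Type*} [AddCommGroup V] [Module ℂ V]
    [FiniteDimensional ℂ V] {f : Module.End ℂ V} (hf : ∀ μ, f.HasEigenvalue μ → μ.re ≠ 0) :
    IsCompl (stableSubspace f) (unstableSubspace f) := by
  refine ⟨disjoint_stableSubspace_unstableSubspace f, codisjoint_iff_le_sup.2 ?_⟩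
  have hle : ⊤ ≤ ⨆ μ ∈ {μ : ℂ | μ.re < 0} ∪ {μ : ℂ | 0 < μ.re}, f.maxGenEigenspace μ :=
    le_biSup_maxGenEigenspace_of_mem_invtSubmodule (Module.End.invtSubmodule.top_mem f)
      fun μ v _ hv₀ hv => (hf μ (Module.End.hasEigenvalue_of_hasEigenvector
        ⟨Module.End.mem_eigenspace_iff.2 hv, hv₀⟩)).lt_or_gt
  rwa [iSup_union] at hle

theorem fromBlocks_diagonal_mulVec_eq_iff {n l R : Type*} [Fintype n] [Fintype l] [Semiring R]
    {X : Matrix n n R} {Z : Matrix l l R} {v w : n ⊕ l → R} :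
    fromBlocks X 0 0 Z *ᵥ v = w ↔
      X *ᵥ (v ∘ Sum.inl) = w ∘ Sum.inl ∧ Z *ᵥ (v ∘ Sum.inr) = w ∘ Sum.inr := by
  rw [fromBlocks_mulVec, ← Sum.elim_comp_inl_inr w, Sum.elim_eq_iff]
  simp

variable {n l : Type*} [Fintype n] [DecidableEq n] [Fintype l] [DecidableEq l]
  {X Y P T T' : Matrix n n ℂ}

/-- `P` is the projection onto the stable subspace of `X` along its unstable subspace. In
particular `X` has no eigenvalue on the imaginary axis. -/
structure IsStableProjection (X P : Matrix n n ℂ) : Prop where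
  isIdempotentElem : IsIdempotentElem P
  range_eq : LinearMap.range (toLin' P) = stableSubspace (toLin' X)
  ker_eq : LinearMap.ker (toLin' P) = unstableSubspace (toLin' X)

namespace IsStableProjection

theorem commute (h : IsStableProjection X P) : Commute X P := by
  have hidem : IsIdempotentElem (toLin' P) := h.isIdempotentElem.map toLinAlgEquiv'
  suffices Commute (toLinAlgEquiv' P) (toLinAlgEquiv' X) from
    this.symm.of_map toLinAlgEquiv'.injective
  refine (LinearMap.IsIdempotentElem.commute_iff hidem).2 ⟨?_, ?_⟩
  · exact h.range_eq ▸ biSup_maxGenEigenspace_mem_invtSubmodule _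
  · exact h.ker_eq ▸ biSup_maxGenEigenspace_mem_invtSubmodule _

theorem re_neg_of_mulVec_eq_self (h : IsStableProjection X P) {μ : ℂ} {v : n → ℂ} (hv₀ : v ≠ 0)
    (hXv : X *ᵥ v = μ • v) (hPv : P *ᵥ v = v) : μ.re < 0 :=
  mem_of_mem_biSup_maxGenEigenspace (f := toLin' X) (s := {μ | μ.re < 0}) hv₀ hXv
    (h.range_eq.le ⟨v, hPv⟩)

theorem re_pos_of_mulVec_eq_zero (h : IsStableProjection X P) {μ : ℂ} {v : n → ℂ} (hv₀ : v ≠ 0)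
    (hXv : X *ᵥ v = μ • v) (hPv : P *ᵥ v = 0) : 0 < μ.re :=
  mem_of_mem_biSup_maxGenEigenspace (f := toLin' X) (s := {μ | 0 < μ.re}) hv₀ hXv
    (h.ker_eq.le hPv)

theorem of_eigenvectors (hP : IsIdempotentElem P) (hXP : Commute X P)
    (hneg : ∀ (μ : ℂ) v, v ≠ 0 → X *ᵥ v = μ • v → P *ᵥ v = v → μ.re < 0)
    (hpos : ∀ (μ : ℂ) v, v ≠ 0 → X *ᵥ v = μ • v → P *ᵥ v = 0 → 0 < μ.re) :
    IsStableProjection X P := by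
  have hidem : IsIdempotentElem (toLin' P) := hP.map toLinAlgEquiv'
  have hcomm : Commute (toLin' P) (toLin' X) := hXP.symm.map toLinAlgEquiv'
  obtain ⟨hrange, hker⟩ := (LinearMap.IsIdempotentElem.commute_iff hidem).1 hcomm
  have hrange_le : LinearMap.range (toLin' P) ≤ stableSubspace (toLin' X) :=
    le_biSup_maxGenEigenspace_of_mem_invtSubmodule hrange fun μ v hv hv₀ hXv =>
      hneg μ v hv₀ hXv ((LinearMap.IsIdempotentElem.mem_range_iff hidem).1 hv)
  have hker_le : LinearMap.ker (toLin' P) ≤ unstableSubspace (toLin' X) :=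
    le_biSup_maxGenEigenspace_of_mem_invtSubmodule hker fun μ v hv hv₀ hXv => hpos μ v hv₀ hXv hv
  have hcompl := LinearMap.IsIdempotentElem.isCompl hidem
  have hdisj := disjoint_stableSubspace_unstableSubspace (toLin' X)
  refine ⟨hP, ?_, ?_⟩
  · exact eq_of_isCompl_of_le_of_disjoint hcompl hrange_le hker_le hdisj
  · exact eq_of_isCompl_of_le_of_disjoint hcompl.symm hker_le hrange_le hdisj.symm

theorem exists_of_forall_spectrum_re_ne_zero (hX : ∀ μ ∈ spectrum ℂ X, μ.re ≠ 0) :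
    ∃ P, IsStableProjection X P := by
  have hcompl : IsCompl (stableSubspace (toLin' X)) (unstableSubspace (toLin' X)) :=
    isCompl_stableSubspace_unstableSubspace fun μ hμ =>
      hX μ (spectrum_toLin' X ▸ hμ.mem_spectrum)
  refine ⟨LinearMap.toMatrix' (Submodule.projection _ _ hcompl), ?_, ?_, ?_⟩
  · exact (Submodule.isIdempotentElem_projection hcompl).map LinearMap.toMatrixAlgEquiv'
  · rw [toLin'_toMatrix', Submodule.range_projection]
  · rw [toLin'_toMatrix', Submodule.ker_projection]

theorem conj (h : IsStableProjection X P) (hT : T * T' = 1) (hY : Y * T = T * X) :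
    IsStableProjection Y (T * P * T') := by
  have hT' : T' * T = 1 := mul_eq_one_comm.1 hT
  have hXT' : T' * Y = X * T' := by
    calc T' * Y = T' * (Y * T) * T' := by simp only [mul_assoc, hT, mul_one]
      _ = X * T' := by rw [hY, ← mul_assoc, hT', one_mul]
  have hT'_conj (v : n → ℂ) : T' *ᵥ ((T * P * T') *ᵥ v) = P *ᵥ (T' *ᵥ v) := by
    simp only [mulVec_mulVec, ← mul_assoc, hT', one_mul]
  have ne_zero {v : n → ℂ} (hv : v ≠ 0) : T' *ᵥ v ≠ 0 := fun hv₀ =>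
    hv (by rw [← one_mulVec v, ← hT, ← mulVec_mulVec, hv₀, mulVec_zero])
  have eigenvector {μ : ℂ} {v : n → ℂ} (hv : Y *ᵥ v = μ • v) :
      X *ᵥ (T' *ᵥ v) = μ • (T' *ᵥ v) := by
    rw [mulVec_mulVec, ← hXT', ← mulVec_mulVec, hv, mulVec_smul]
  refine of_eigenvectors ?_ ?_ (fun μ v hv₀ hYv hv => ?_) fun μ v hv₀ hYv hv => ?_
  · calc T * P * T' * (T * P * T') = T * (P * (T' * T) * P) * T' := by noncomm_ring
      _ = T * P * T' := by rw [hT', mul_one, h.isIdempotentElem.eq]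
  · calc Y * (T * P * T') = T * (X * P) * T' := by simp only [← mul_assoc, hY]
      _ = T * P * T' * Y := by rw [h.commute.eq]; simp only [mul_assoc, hXT']
  · exact h.re_neg_of_mulVec_eq_self (ne_zero hv₀) (eigenvector hYv) (by rw [← hT'_conj, hv])
  · exact h.re_pos_of_mulVec_eq_zero (ne_zero hv₀) (eigenvector hYv)
      (by rw [← hT'_conj, hv, mulVec_zero])

theorem smul (h : IsStableProjection X P) {r : ℝ} (hr : 0 < r) :
    IsStableProjection (r • X) P := by
  have eigenvector {μ : ℂ} {v : n → ℂ} (hv : (r • X) *ᵥ v = μ • v) :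
      X *ᵥ v = (r⁻¹ • μ) • v := by
    rw [smul_assoc, ← hv, smul_mulVec, inv_smul_smul₀ hr.ne']
  refine of_eigenvectors h.isIdempotentElem (h.commute.smul_left _)
    (fun μ v hv₀ hXv hv => ?_) fun μ v hv₀ hXv hv => ?_
  · have hneg : r⁻¹ * μ.re < 0 := by
      simpa using h.re_neg_of_mulVec_eq_self hv₀ (eigenvector hXv) hv
    exact neg_of_mul_neg_right hneg (inv_pos.2 hr).le
  · have hpos : 0 < r⁻¹ * μ.re := by
      simpa using h.re_pos_of_mulVec_eq_zero hv₀ (eigenvector hXv) hv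
    exact pos_of_mul_pos_right hpos (inv_pos.2 hr).le

theorem fromBlocks_diagonal {Z R : Matrix l l ℂ} (h : IsStableProjection X P)
    (h' : IsStableProjection Z R) :
    IsStableProjection (fromBlocks X 0 0 Z) (fromBlocks P 0 0 R) := by
  have hinr {v : n ⊕ l → ℂ} (hv₀ : v ≠ 0) (hv₁ : v ∘ Sum.inl = 0) : v ∘ Sum.inr ≠ 0 := fun hv₂ =>
    hv₀ (by rw [← Sum.elim_comp_inl_inr v, hv₁, hv₂, Sum.elim_zero_zero])
  refine of_eigenvectors ?_ ?_ (fun μ v hv₀ hXv hv => ?_) fun μ v hv₀ hXv hv => ?_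
  · simp [IsIdempotentElem, fromBlocks_multiply, h.isIdempotentElem.eq, h'.isIdempotentElem.eq]
  · simp [commute_iff_eq, fromBlocks_multiply, h.commute.eq, h'.commute.eq]
  all_goals
    obtain ⟨hXv₁, hZv₂⟩ := fromBlocks_diagonal_mulVec_eq_iff.1 hXv
    obtain ⟨hPv₁, hRv₂⟩ := fromBlocks_diagonal_mulVec_eq_iff.1 hv
    by_cases hv₁ : v ∘ Sum.inl = 0
  · exact h'.re_neg_of_mulVec_eq_self (hinr hv₀ hv₁) hZv₂ hRv₂
  · exact h.re_neg_of_mulVec_eq_self hv₁ hXv₁ hPv₁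
  · exact h'.re_pos_of_mulVec_eq_zero (hinr hv₀ hv₁) hZv₂ hRv₂
  · exact h.re_pos_of_mulVec_eq_zero hv₁ hXv₁ hPv₁

end IsStableProjection
end StableProjection

section ImplicitFunction

open Filter Topology

theorem exists_contDiffAt_implicitFunction_of_ker_eq_bot {𝕜 E F : Type*} [RCLike 𝕜]
    [NormedAddCommGroup E] [NormedSpace 𝕜 E] [CompleteSpace E]
    [NormedAddCommGroup F] [NormedSpace 𝕜 F] [FiniteDimensional 𝕜 F]
    {k : WithTop ℕ∞} (hk : k ≠ 0) {f : E × F → F} {x₀ : E} {y₀ : F} {f₂ : F →L[𝕜] F}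
    (hf : ContDiffAt 𝕜 k f (x₀, y₀)) (hf₂ : HasFDerivAt (fun y => f (x₀, y)) f₂ y₀)
    (hker : ∀ v, f₂ v = 0 → v = 0) :
    ∃ ψ : E → F, ContDiffAt 𝕜 k ψ x₀ ∧ ψ x₀ = y₀ ∧ ∀ᶠ x in 𝓝 x₀, f (x, ψ x) = f (x₀, y₀) := by
  have : CompleteSpace F := FiniteDimensional.complete 𝕜 F
  have hpartial : fderiv 𝕜 f (x₀, y₀) ∘L .inr 𝕜 E F = f₂ :=
    ((hf.differentiableAt hk).hasFDerivAt.comp y₀ (hasFDerivAt_prodMk_right x₀ y₀)).unique hf₂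
  have hinj : Function.Injective (f₂ : F →ₗ[𝕜] F) :=
    (injective_iff_map_eq_zero (f₂ : F →ₗ[𝕜] F)).2 hker
  have hinv : (fderiv 𝕜 f (x₀, y₀) ∘L .inr 𝕜 E F).IsInvertible := by
    rw [hpartial]
    exact ⟨(LinearEquiv.ofInjectiveEndo _ hinj).toContinuousLinearEquiv, rfl⟩
  exact ⟨hf.implicitFunction hk hinv, hf.contDiffAt_implicitFunction hk hinv,
    hf.implicitFunction_apply_self hk hinv, hf.eventually_apply_implicitFunction hk hinv⟩

end ImplicitFunction

section AnalyticStableProjection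

open Filter Topology
open scoped Matrix.Norms.Operator

variable {n : Type*} [Fintype n] [DecidableEq n]

theorem aeval_mul_eq_mul_aeval {R A : Type*} [CommSemiring R] [Semiring A] [Algebra R A]
    {a b v : A}
    (h : a * v = v * b) (p : Polynomial R) :
    Polynomial.aeval a p * v = v * Polynomial.aeval b p := by
  induction p using Polynomial.induction_on' with
  | add p q hp hq => simp only [map_add, add_mul, mul_add, hp, hq]
  | monomial i c =>
    have hpow : a ^ i * v = v * b ^ i := (SemiconjBy.pow_right h.symm i).symm
    rw [Polynomial.aeval_monomial, Polynomial.aeval_monomial, mul_assoc, hpow, ← mul_assoc,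
      ← mul_assoc, Algebra.commutes]

theorem eq_zero_of_mul_eq_mul_of_disjoint_spectrum {K : Type*} [Field K] [IsAlgClosed K]
    {X Y V : Matrix n n K} (h : X * V = V * Y) (hXY : Disjoint (spectrum K X) (spectrum K Y)) :
    V = 0 := by
  -- `χ_Y(X) V = V χ_Y(Y) = 0` by Cayley–Hamilton, and `χ_Y(X)` is invertible.
  cases isEmpty_or_nonempty n
  · exact Subsingleton.elim _ _
  have hunit : IsUnit (Polynomial.aeval X Y.charpoly) := by
    rw [← spectrum.zero_notMem_iff K, spectrum.map_polynomial_aeval_of_nonempty _ _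
      (spectrum.nonempty_of_isAlgClosed_of_finiteDimensional K X)]
    rintro ⟨μ, hμX, hμ⟩
    exact Set.disjoint_left.1 hXY hμX (Matrix.mem_spectrum_iff_isRoot_charpoly.2 hμ)
  have hzero := aeval_mul_eq_mul_aeval h Y.charpoly
  rwa [aeval_self_charpoly, mul_zero, hunit.mul_right_eq_zero] at hzero

theorem eq_zero_of_mul_add_mul_eq_zero {Y V : Matrix n n ℂ} (hY : ∀ μ ∈ spectrum ℂ Y, 0 < μ.re)
    (h : Y * V + V * Y = 0) : V = 0 := by
  refine eq_zero_of_mul_eq_mul_of_disjoint_spectrum (Y := -Y) (K := ℂ)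
    (by rw [mul_neg, eq_neg_iff_add_eq_zero, h]) (Set.disjoint_left.2 fun μ hμ hμ' => ?_)
  rw [← spectrum.neg_eq, Set.mem_neg] at hμ'
  linarith [hY μ hμ, hY _ hμ', neg_re μ]

theorem eventually_spectrum_subset {A : Type*} [NormedRing A] [NormedAlgebra ℂ A]
    [CompleteSpace A] {a : A} {U : Set ℂ} (hU : IsOpen U) (ha : spectrum ℂ a ⊆ U) :
    ∀ᶠ b in 𝓝 a, spectrum ℂ b ⊆ U :=
  (upperHemicontinuous_spectrum ℂ A a U (hU.mem_nhdsSet.2 ha)).mono fun _ => subset_of_mem_nhdsSet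

theorem mem_spectrum_iff_exists_mulVec_eq_smul {K : Type*} [Field K] {X : Matrix n n K} {μ : K} :
    μ ∈ spectrum K X ↔ ∃ v, v ≠ 0 ∧ X *ᵥ v = μ • v := by
  rw [← spectrum_toLin', ← Module.End.hasEigenvalue_iff_mem_spectrum]
  refine ⟨fun h => ?_, fun ⟨v, hv₀, hv⟩ => Module.End.hasEigenvalue_of_hasEigenvector
    ⟨Module.End.mem_eigenspace_iff.2 hv, hv₀⟩⟩
  obtain ⟨v, hv⟩ := h.exists_hasEigenvector
  exact ⟨v, hv.2, hv.apply_eq_smul⟩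

theorem isUnit_of_spectrum_re_pos {A : Type*} [Ring A] [Algebra ℂ A] {a : A}
    (ha : ∀ μ ∈ spectrum ℂ a, 0 < μ.re) : IsUnit a :=
  spectrum.zero_notMem_iff ℂ |>.1 fun h => (ha 0 h).false

namespace IsStableProjection

theorem of_mul_self_eq_one {Y S : Matrix n n ℂ} (hS : S * S = 1)
    (hYS : Commute Y S) (hY : ∀ μ ∈ spectrum ℂ Y, 0 < μ.re) :
    IsStableProjection (Y * S) ((2 : ℂ)⁻¹ • (1 - S)) := by
  refine of_eigenvectors ?_ ?_ (fun μ v hv₀ hYSv hv => ?_) fun μ v hv₀ hYSv hv => ?_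
  · rw [IsIdempotentElem, smul_mul_smul_comm, sub_mul, one_mul, mul_sub, mul_one, hS]
    module
  · exact ((Commute.one_right _).sub_right (hYS.mul_left (Commute.refl S))).smul_right _
  · have hSv : S *ᵥ v = -v := by
      rw [smul_mulVec, sub_mulVec, one_mulVec, inv_smul_eq_iff₀ two_ne_zero, two_smul] at hv
      linear_combination -hv
    have hYv : Y *ᵥ v = (-μ) • v := by
      rw [neg_smul, ← hYSv, ← mulVec_mulVec, hSv, mulVec_neg, neg_neg]
    simpa using hY _ (mem_spectrum_iff_exists_mulVec_eq_smul.2 ⟨v, hv₀, hYv⟩)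
  · have hSv : S *ᵥ v = v := by
      rw [smul_mulVec, sub_mulVec, one_mulVec, inv_smul_eq_iff₀ two_ne_zero, smul_zero] at hv
      exact (sub_eq_zero.1 hv).symm
    have hYv : Y *ᵥ v = μ • v := by rw [← hYSv, ← mulVec_mulVec, hSv]
    exact hY _ (mem_spectrum_iff_exists_mulVec_eq_smul.2 ⟨v, hv₀, hYv⟩)

theorem of_mul_self_eq_mul_self {X Y : Matrix n n ℂ} (hsq : Y * Y = X * X)
    (hY : ∀ μ ∈ spectrum ℂ Y, 0 < μ.re) :
    IsStableProjection X ((2 : ℂ)⁻¹ • (1 - Y⁻¹ * X)) := by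
  have hdet : IsUnit Y.det := (isUnit_iff_isUnit_det Y).1 (isUnit_of_spectrum_re_pos hY)
  have hXY : X * Y = Y * X := by
    refine sub_eq_zero.1 (eq_zero_of_mul_add_mul_eq_zero hY ?_)
    calc Y * (X * Y - Y * X) + (X * Y - Y * X) * Y = X * (Y * Y) - Y * Y * X := by noncomm_ring
      _ = 0 := by rw [hsq, mul_assoc, sub_self]
  have hXYinv : Commute X Y⁻¹ := by
    calc X * Y⁻¹ = Y⁻¹ * (Y * X) * Y⁻¹ := by rw [nonsing_inv_mul_cancel_left _ _ hdet]
      _ = Y⁻¹ * X := by rw [← hXY, mul_assoc, mul_nonsing_inv_cancel_right _ _ hdet]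
  have hsign : Y⁻¹ * X * (Y⁻¹ * X) = 1 := by
    calc Y⁻¹ * X * (Y⁻¹ * X) = Y⁻¹ * (Y⁻¹ * (X * X)) := by
          rw [mul_assoc, ← mul_assoc X, hXYinv.eq, mul_assoc]
      _ = 1 := by rw [← hsq, nonsing_inv_mul_cancel_left _ _ hdet, nonsing_inv_mul _ hdet]
  have hcomm : Commute Y (Y⁻¹ * X) := by
    rw [commute_iff_eq, mul_nonsing_inv_cancel_left _ _ hdet, mul_assoc, hXY,
      nonsing_inv_mul_cancel_left _ _ hdet]
  simpa only [mul_nonsing_inv_cancel_left _ _ hdet] using of_mul_self_eq_one hsign hcomm hY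

end IsStableProjection

theorem exists_mul_self_eq_mul_self_of_spectrum_re_ne_zero {X : Matrix n n ℂ}
    (hX : ∀ μ ∈ spectrum ℂ X, μ.re ≠ 0) :
    ∃ Y : Matrix n n ℂ, Y * Y = X * X ∧ ∀ μ ∈ spectrum ℂ Y, 0 < μ.re := by
  obtain ⟨P, hP⟩ := IsStableProjection.exists_of_forall_spectrum_re_ne_zero hX
  -- `1 - 2P` is the sign of `X`, so `X (1 - 2P)` plays the role of `|X|`.
  have hPP : P * P = P := hP.isIdempotentElem
  have hsign : (1 - (P + P)) * (1 - (P + P)) = 1 := by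
    simp only [mul_sub, sub_mul, mul_add, add_mul, mul_one, one_mul, hPP]
    abel
  have hcomm : Commute (1 - (P + P)) X :=
    ((Commute.one_right X).sub_right (hP.commute.add_right hP.commute)).symm
  refine ⟨X * (1 - (P + P)), ?_, fun μ hμ => ?_⟩
  · rw [hcomm.mul_mul_mul_comm, hsign, mul_one]
  · obtain ⟨v, hv₀, hv⟩ := mem_spectrum_iff_exists_mulVec_eq_smul.1 hμ
    by_cases hPv : P *ᵥ v = 0
    · refine hP.re_pos_of_mulVec_eq_zero hv₀ ?_ hPv
      simpa [← mulVec_mulVec, sub_mulVec, add_mulVec, hPv] using hv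
    · suffices (-μ).re < 0 by simpa using this
      refine hP.re_neg_of_mulVec_eq_self hPv ?_ (by rw [mulVec_mulVec, hPP])
      calc X *ᵥ (P *ᵥ v) = -(P *ᵥ ((X * (1 - (P + P))) *ᵥ v)) := by
            rw [mulVec_mulVec, mulVec_mulVec, ← mul_assoc, ← hP.commute.eq, mul_assoc, mul_sub,
              mul_add, hPP, ← neg_mulVec]
            noncomm_ring
        _ = (-μ) • (P *ᵥ v) := by rw [hv, mulVec_smul, neg_smul]

theorem exists_contDiffAt_mul_self_eq_mul_self {X₀ Y₀ : Matrix n n ℂ} (hsq : Y₀ * Y₀ = X₀ * X₀)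
    (hY₀ : ∀ μ ∈ spectrum ℂ Y₀, 0 < μ.re) :
    ∃ ψ : Matrix n n ℂ → Matrix n n ℂ, ContDiffAt ℝ ω ψ X₀ ∧ ψ X₀ = Y₀ ∧
      ∀ᶠ X in 𝓝 X₀, ψ X * ψ X = X * X := by
  have hderiv := ((hasFDerivAt_id (𝕜 := ℝ) Y₀).mul' (hasFDerivAt_id Y₀)).sub_const (X₀ * X₀)
  obtain ⟨ψ, hψ, hψX₀, heq⟩ := exists_contDiffAt_implicitFunction_of_ker_eq_bot (k := ω) (by simp)
    (f := fun z : Matrix n n ℂ × Matrix n n ℂ => z.2 * z.2 - z.1 * z.1)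
    (by fun_prop) hderiv fun V hV => eq_zero_of_mul_add_mul_eq_zero hY₀ hV
  refine ⟨ψ, hψ, hψX₀, heq.mono fun X hX => ?_⟩
  rwa [hsq, sub_self, sub_eq_zero] at hX

theorem contDiffAt_matrix_inv {E : Type*} [NormedAddCommGroup E] [NormedSpace ℝ E]
    {k : WithTop ℕ∞} {F : E → Matrix n n ℂ} {x : E} (hF : ContDiffAt ℝ k F x)
    (hx : IsUnit (F x)) : ContDiffAt ℝ k (fun y => (F y)⁻¹) x := by
  simp only [nonsing_inv_eq_ringInverse]
  obtain ⟨u, hu⟩ := hx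
  exact (hu ▸ contDiffAt_ringInverse ℝ u).comp x hF

theorem exists_contDiffAt_isStableProjection {X₀ : Matrix n n ℂ}
    (hX₀ : ∀ μ ∈ spectrum ℂ X₀, μ.re ≠ 0) :
    ∃ π : Matrix n n ℂ → Matrix n n ℂ, ContDiffAt ℝ ω π X₀ ∧
      ∀ᶠ X in 𝓝 X₀, IsStableProjection X (π X) := by
  obtain ⟨Y₀, hsq₀, hY₀⟩ := exists_mul_self_eq_mul_self_of_spectrum_re_ne_zero hX₀
  obtain ⟨ψ, hψ, rfl, hsq⟩ := exists_contDiffAt_mul_self_eq_mul_self hsq₀ hY₀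
  have hre : ∀ᶠ X in 𝓝 X₀, spectrum ℂ (ψ X) ⊆ {μ | 0 < μ.re} :=
    hψ.continuousAt.eventually
      (eventually_spectrum_subset (isOpen_lt continuous_const continuous_re) hY₀)
  refine ⟨fun X => (2 : ℂ)⁻¹ • (1 - (ψ X)⁻¹ * X), ?_, ?_⟩
  · have hinv := contDiffAt_matrix_inv hψ (isUnit_of_spectrum_re_pos hY₀)
    exact (contDiffAt_const.sub (hinv.mul contDiffAt_id)).const_smul (2 : ℂ)⁻¹
  · filter_upwards [hsq, hre] with X hX hreX
    exact .of_mul_self_eq_mul_self hX hreX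

end AnalyticStableProjection

section Decoupling

open Filter Topology
open scoped Matrix.Norms.Operator

theorem contDiffAt_fromBlocks {n E : Type*} [Fintype n] [NormedAddCommGroup E] [NormedSpace ℝ E]
    {x : E} {k : WithTop ℕ∞} {a b c d : E → Matrix n n ℂ} (ha : ContDiffAt ℝ k a x)
    (hb : ContDiffAt ℝ k b x) (hc : ContDiffAt ℝ k c x) (hd : ContDiffAt ℝ k d x) :
    ContDiffAt ℝ k (fun y => fromBlocks (a y) (b y) (c y) (d y)) x := by
  let blocks : (Matrix n n ℂ × Matrix n n ℂ × Matrix n n ℂ × Matrix n n ℂ) →ₗ[ℝ]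
      Matrix (n ⊕ n) (n ⊕ n) ℂ :=
    { toFun := fun z => fromBlocks z.1 z.2.1 z.2.2.1 z.2.2.2
      map_add' := fun z w => by simp [fromBlocks_add]
      map_smul' := fun r z => by simp [fromBlocks_smul] }
  have hblocks : ContDiff ℝ k blocks := (LinearMap.toContinuousLinearMap blocks).contDiff
  exact hblocks.contDiffAt.comp x (ha.prodMk (hb.prodMk (hc.prodMk hd)))

variable {n : Type*} [Fintype n] [DecidableEq n]

theorem IsStableProjection.of_riccati_of_sylvester {R A K L P Q : Matrix n n ℂ}
    (hk : R + A * K = K * K) (hl : L * (A - K) - K * L = 1) (hP : IsStableProjection K P)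
    (hQ : IsStableProjection (A - K) Q) :
    IsStableProjection (fromBlocks 0 1 R A)
      (fromBlocks 1 L K (1 + K * L) * fromBlocks P 0 0 Q *
        fromBlocks (1 + L * K) (-L) (-K) 1) := by
  refine (hP.fromBlocks_diagonal hQ).conj ?_ ?_
  · rw [fromBlocks_multiply, ← fromBlocks_one]
    congr 1 <;> noncomm_ring
  · have hl' : L * (A - K) = 1 + K * L := sub_eq_iff_eq_add.1 hl
    have hcorner : R * L + A * (1 + K * L) = (1 + K * L) * (A - K) := by
      calc R * L + A * (1 + K * L) = (R + A * K) * L + A := by noncomm_ring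
        _ = K * (1 + K * L) + (A - K) := by rw [hk]; noncomm_ring
        _ = (1 + K * L) * (A - K) := by rw [add_mul, one_mul, mul_assoc, hl', add_comm]
    rw [fromBlocks_multiply, fromBlocks_multiply]
    congr 1
    · simp
    · simpa using hl'.symm
    · simpa using hk
    · simpa using hcorner

theorem exists_contDiffAt_riccati_sylvester {𝔸 : Type*} [NormedRing 𝔸] [NormedAlgebra ℝ 𝔸]
    [FiniteDimensional ℝ 𝔸] (m₀ : 𝔸) (a₀ : 𝔸ˣ) :
    ∃ K L : 𝔸 × 𝔸 × ℝ → 𝔸, ContDiffAt ℝ ω K (m₀, a₀, 0) ∧ ContDiffAt ℝ ω L (m₀, a₀, 0) ∧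
      K (m₀, a₀, 0) = -(a₀⁻¹ * m₀) ∧ ∀ᶠ y in 𝓝 (m₀, (a₀ : 𝔸), (0 : ℝ)),
        y.1 + y.2.1 * K y = y.2.2 • (K y * K y) ∧
        L y * (y.2.1 - y.2.2 • K y) - y.2.2 • (K y * L y) = 1 := by
  have : CompleteSpace 𝔸 := FiniteDimensional.complete ℝ 𝔸
  let f : (𝔸 × 𝔸 × ℝ) × 𝔸 × 𝔸 → 𝔸 × 𝔸 := fun z =>
    (z.1.1 + z.1.2.1 * z.2.1 - z.1.2.2 • (z.2.1 * z.2.1),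
      z.2.2 * (z.1.2.1 - z.1.2.2 • z.2.1) - z.1.2.2 • (z.2.1 * z.2.2))
  have hf₂ : HasFDerivAt (fun w : 𝔸 × 𝔸 => f ((m₀, a₀, 0), w))
      (((ContinuousLinearMap.mul ℝ 𝔸 a₀).prodMap ((ContinuousLinearMap.mul ℝ 𝔸).flip a₀)))
      (-(a₀⁻¹ * m₀), (a₀⁻¹ : 𝔸ˣ)) := by
    have haffine : (fun w : 𝔸 × 𝔸 => f ((m₀, a₀, 0), w)) = fun w => (m₀, 0) +
        ((ContinuousLinearMap.mul ℝ 𝔸 a₀).prodMap ((ContinuousLinearMap.mul ℝ 𝔸).flip a₀)) w := by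
      ext w <;> simp [f]
    rw [haffine]
    exact (ContinuousLinearMap.hasFDerivAt _).const_add _
  obtain ⟨ψ, hψ, hψ₀, heq⟩ := exists_contDiffAt_implicitFunction_of_ker_eq_bot (k := ω) (by simp)
    (f := f) (by fun_prop) hf₂ fun v hv => by simpa [Prod.ext_iff] using hv
  refine ⟨fun y => (ψ y).1, fun y => (ψ y).2, hψ.fst, hψ.snd, congrArg Prod.fst hψ₀, ?_⟩
  filter_upwards [heq] with y hy
  simpa [f, Prod.ext_iff, sub_eq_zero] using hy

theorem exists_contDiffAt_isStableProjection_fromBlocks {M₀ A₀ : Matrix n n ℂ}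
    (hA₀ : ∀ μ ∈ spectrum ℂ A₀, μ.re ≠ 0) (hM₀ : ∀ μ ∈ spectrum ℂ (-(A₀⁻¹ * M₀)), μ.re ≠ 0) :
    ∃ Q : Matrix n n ℂ × Matrix n n ℂ × ℝ → Matrix (n ⊕ n) (n ⊕ n) ℂ,
      ContDiffAt ℝ ω Q (M₀, A₀, 0) ∧ ∀ᶠ y in 𝓝 (M₀, A₀, (0 : ℝ)), 0 < y.2.2 →
        IsStableProjection (fromBlocks 0 1 (y.2.2 • y.1) y.2.1) (Q y) := by
  obtain ⟨a₀, rfl⟩ : IsUnit A₀ := spectrum.zero_notMem_iff ℂ |>.1 fun h => hA₀ 0 h rfl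
  obtain ⟨K, L, hK, hL, hK₀, hKL⟩ := exists_contDiffAt_riccati_sylvester M₀ a₀
  rw [← coe_units_inv, ← hK₀] at hM₀
  obtain ⟨π₁, hπ₁, hslow⟩ := exists_contDiffAt_isStableProjection hM₀
  obtain ⟨π₂, hπ₂, hfast⟩ := exists_contDiffAt_isStableProjection hA₀
  set y₀ : Matrix n n ℂ × Matrix n n ℂ × ℝ := (M₀, a₀, 0)
  have hρK : ContDiffAt ℝ ω (fun y => y.2.2 • K y) y₀ := contDiffAt_snd.snd.smul hK
  have hF : ContDiffAt ℝ ω (fun y => y.2.1 - y.2.2 • K y) y₀ := contDiffAt_snd.fst.sub hρK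
  have hF₀ : y₀.2.1 - y₀.2.2 • K y₀ = a₀ := by simp [y₀]
  rw [← hF₀] at hπ₂ hfast
  have hπK : ContDiffAt ℝ ω (fun y => π₁ (K y)) y₀ := hπ₁.comp y₀ hK
  have hπF : ContDiffAt ℝ ω (fun y => π₂ (y.2.1 - y.2.2 • K y)) y₀ := hπ₂.comp y₀ hF
  refine ⟨fun y => fromBlocks 1 (L y) (y.2.2 • K y) (1 + (y.2.2 • K y) * L y) *
      fromBlocks (π₁ (K y)) 0 0 (π₂ (y.2.1 - y.2.2 • K y)) *
      fromBlocks (1 + L y * (y.2.2 • K y)) (-(L y)) (-(y.2.2 • K y)) 1, ?_, ?_⟩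
  · exact ((contDiffAt_fromBlocks contDiffAt_const hL hρK
      (contDiffAt_const.add (hρK.mul hL))).mul
      (contDiffAt_fromBlocks hπK contDiffAt_const contDiffAt_const hπF)).mul
      (contDiffAt_fromBlocks (contDiffAt_const.add (hL.mul hρK)) hL.neg hρK.neg contDiffAt_const)
  · filter_upwards [hKL, hK.continuousAt.eventually hslow, hF.continuousAt.eventually hfast]
      with y ⟨hriccati, hsylvester⟩ hslow_y hfast_y hρ
    refine .of_riccati_of_sylvester ?_ ?_ (hslow_y.smul hρ) hfast_y
    · rw [mul_smul_comm, ← smul_add, hriccati, smul_mul_smul_comm, smul_smul]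
    · rw [smul_mul_assoc, hsylvester]

end Decoupling

section Spectrum

open Filter Topology
open scoped NNReal

variable {n : Type*} [Fintype n] [DecidableEq n]

theorem pow_card_le_nnnorm_det {X : Matrix n n ℂ} {r : ℝ≥0}
    (hX : ∀ μ ∈ spectrum ℂ X, r ≤ ‖μ‖₊) : r ^ Fintype.card n ≤ ‖X.det‖₊ := by
  have hcard : X.charpoly.roots.card = Fintype.card n := by
    rw [← (IsAlgClosed.splits X.charpoly).natDegree_eq_card_roots, charpoly_natDegree_eq_dim]
  rw [det_eq_prod_roots_charpoly, ← hcard]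
  change _ ≤ nnnormHom X.charpoly.roots.prod
  rw [map_multiset_prod, ← Multiset.card_map nnnormHom]
  refine Multiset.pow_card_le_prod fun s hs => ?_
  obtain ⟨μ, hμ, rfl⟩ := Multiset.mem_map.1 hs
  exact hX μ (mem_spectrum_iff_isRoot_charpoly.2 (Polynomial.isRoot_of_mem_roots hμ))

theorem isUnit_of_spectrum_re_ge {a b : Matrix n n ℂ} {c : ℝ} (hc : 0 < c)
    (h : ∀ t : ℝ, ∀ μ ∈ spectrum ℂ ((I * t) • a + (t : ℂ) ^ 2 • b), c * t ^ 2 ≤ μ.re) :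
    IsUnit b := by
  -- Divide by `t²` and let `s = t⁻¹ → 0⁺`: the eigenvalues of `b + i s a` stay away from zero.
  lift c to ℝ≥0 using hc.le
  have hdet {s : ℝ} (hs : 0 < s) : c ^ Fintype.card n ≤ ‖((s * I) • a + b).det‖₊ := by
    refine pow_card_le_nnnorm_det fun μ hμ => ?_
    have hs₀ : ((s⁻¹ : ℝ) : ℂ) ^ 2 ≠ 0 := by simp [hs.ne']
    have hscale : Units.mk0 _ hs₀ • ((s * I) • a + b) =
        (I * (s⁻¹ : ℝ)) • a + ((s⁻¹ : ℝ) : ℂ) ^ 2 • b := by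
      rw [Units.smul_mk0, smul_add, smul_smul]
      congr 2
      push_cast
      field_simp
    have hre := h s⁻¹ _ (hscale ▸ (spectrum.smul_mem_smul_iff (r := Units.mk0 _ hs₀)).2 hμ)
    rw [Units.smul_mk0, smul_eq_mul, ← ofReal_pow, re_ofReal_mul, mul_comm] at hre
    exact (le_of_mul_le_mul_left hre (by positivity)).trans (re_le_norm μ)
  have hcont : Continuous fun s : ℝ => ‖((s * I) • a + b).det‖₊ := by fun_prop
  have hlim : Tendsto (fun s : ℝ => ‖((s * I) • a + b).det‖₊) (𝓝[>] 0) (𝓝 ‖b.det‖₊) := by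
    simpa using (hcont.tendsto 0).mono_left nhdsWithin_le_nhds
  have hle : c ^ Fintype.card n ≤ ‖b.det‖₊ :=
    ge_of_tendsto hlim (eventually_nhdsWithin_of_forall fun s hs => hdet hs)
  rw [isUnit_iff_isUnit_det, isUnit_iff_ne_zero, ← nnnorm_pos]
  exact (pow_pos (by exact_mod_cast hc) _).trans_le hle

theorem re_ne_zero_of_mem_spectrum_inv_mul {a b : Matrix n n ℂ} {c : ℝ} (hc : 0 < c)
    (ha : IsUnit a)
    (h : ∀ t : ℝ, ∀ μ ∈ spectrum ℂ ((I * t) • a + (t : ℂ) ^ 2 • b), c * t ^ 2 ≤ μ.re)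
    {μ : ℂ} (hμ : μ ∈ spectrum ℂ (b⁻¹ * a)) : μ.re ≠ 0 := by
  intro hre
  have hb : IsUnit b.det := (isUnit_iff_isUnit_det b).1 (isUnit_of_spectrum_re_ge hc h)
  obtain ⟨v, hv₀, hv⟩ := mem_spectrum_iff_exists_mulVec_eq_smul.1 hμ
  have hav : a *ᵥ v = μ • b *ᵥ v := by
    rw [← mulVec_smul, ← hv, mulVec_mulVec, mul_nonsing_inv_cancel_left _ _ hb]
  have hμ_eq : μ = I * μ.im := by apply Complex.ext <;> simp [hre]
  have hzero : 0 ∈ spectrum ℂ ((I * μ.im) • a + (μ.im : ℂ) ^ 2 • b) := by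
    refine mem_spectrum_iff_exists_mulVec_eq_smul.2 ⟨v, hv₀, ?_⟩
    have hsq : μ * μ + (μ.im : ℂ) ^ 2 = 0 := by
      linear_combination (μ + I * μ.im) * hμ_eq + (μ.im : ℂ) ^ 2 * I_sq
    rw [← hμ_eq, add_mulVec, smul_mulVec, smul_mulVec, hav, smul_smul, ← add_smul, hsq, zero_smul,
      zero_smul]
  have him : μ.im = 0 := by
    have := nonpos_of_mul_nonpos_right (h _ 0 hzero) hc
    simpa using this.antisymm (sq_nonneg _)
  have hav₀ : a *ᵥ v = a *ᵥ 0 := by rw [hav, hμ_eq, him]; simp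
  exact hv₀ (mulVec_injective_of_isUnit ha hav₀)

theorem inv_mul_inv_mul_inv_mul {R : Type*} [CommRing R] {a b : Matrix n n R} (hb : IsUnit b)
    (X : Matrix n n R) :
    (b⁻¹ * a)⁻¹ * (b⁻¹ * X) = a⁻¹ * X := by
  have hdet : IsUnit b.det := (isUnit_iff_isUnit_det b).1 hb
  rw [Matrix.mul_inv_rev, nonsing_inv_nonsing_inv _ hdet, mul_assoc,
    mul_nonsing_inv_cancel_left _ _ hdet]

end Spectrum

section Symbols

variable {N m : ℕ} {A : Fin (m + 1) → Matrix (Fin N) (Fin N) ℝ}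

theorem cmap_sum_smul {ι : Type*} (s : Finset ι) (ξ : ι → ℝ) (X : ι → Matrix (Fin N) (Fin N) ℝ) :
    cmap (∑ j ∈ s, ξ j • X j) = ∑ j ∈ s, (ξ j : ℂ) • cmap (X j) := by
  ext i k
  simp [cmap, Matrix.sum_apply]

theorem isUnit_cmap {X : Matrix (Fin N) (Fin N) ℝ} (hX : X.det ≠ 0) : IsUnit (cmap X) :=
  ((isUnit_iff_isUnit_det X).2 hX.isUnit).map ofRealHom.mapMatrix

/-- The first-order tangential symbol `(iτ + γ) Id + Σ_{j < d} i η_j A_j`, the part of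
`B_{d,d} ℳ(p, ζ)` that is homogeneous of degree one in `ζ`. -/
noncomputable def tangentialSymbol (A : Fin (m + 1) → Matrix (Fin N) (Fin N) ℝ) (ζ : Freq m) :
    Matrix (Fin N) (Fin N) ℂ :=
  (I * ζ.1 + ζ.2.2) • 1 + ∑ j : Fin m, (I * ζ.2.1 j) • cmap (A j.castSucc)

/-- The block `ρ⁻¹ ℳ(p, ρ ζ)`, written so that it also makes sense at `ρ = 0`. -/
noncomputable def calMRescaled (A : Fin (m + 1) → Matrix (Fin N) (Fin N) ℝ)
    (B : Fin (m + 1) → Fin (m + 1) → Matrix (Fin N) (Fin N) ℝ) (ζ : Freq m) (ρ : ℝ) :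
    Matrix (Fin N) (Fin N) ℂ :=
  (cmap (B (Fin.last m) (Fin.last m)))⁻¹ *
    (tangentialSymbol A ζ + ρ • ∑ j : Fin m, ∑ k : Fin m,
      (ζ.2.1 j * ζ.2.1 k) • cmap (B j.castSucc k.castSucc))

theorem calM_smul (A : Fin (m + 1) → Matrix (Fin N) (Fin N) ℝ)
    (B : Fin (m + 1) → Fin (m + 1) → Matrix (Fin N) (Fin N) ℝ) (ζ : Freq m) (ρ : ℝ) :
    calM A B (ρ • ζ) = ρ • calMRescaled A B ζ ρ := by
  simp only [calM, calMRescaled, tangentialSymbol, ← mul_smul_comm, smul_add, Finset.smul_sum,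
    Prod.smul_fst, Prod.smul_snd, Pi.smul_apply, smul_eq_mul, ofReal_mul, ← Complex.coe_smul]
  congr! 3
  · module
  · congr! 1
    module
  · refine Finset.sum_congr rfl fun l _ => ?_
    module

theorem mulVec_cmap_sum_snoc_smul {ζ : Freq m} {t : ℝ} {v : Fin N → ℂ}
    (hv : tangentialSymbol A ζ *ᵥ v = -((I * t) • cmap (A (Fin.last m)) *ᵥ v)) :
    cmap (∑ j, (Fin.snoc ζ.2.1 t : Fin (m + 1) → ℝ) j • A j) *ᵥ v =
      (-ζ.1 + I * ζ.2.2 : ℂ) • v := by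
  have hsum : ∑ j : Fin m, (I * ζ.2.1 j) • cmap (A j.castSucc) =
      I • ∑ j : Fin m, (ζ.2.1 j : ℂ) • cmap (A j.castSucc) := by
    simp only [Finset.smul_sum, smul_smul]
  rw [tangentialSymbol, hsum, add_mulVec, smul_mulVec, smul_mulVec, one_mulVec] at hv
  rw [cmap_sum_smul, Fin.sum_univ_castSucc, add_mulVec]
  simp only [Fin.snoc_castSucc, Fin.snoc_last, smul_mulVec]
  linear_combination (norm := skip) (-I) • hv
  match_scalars
  · linear_combination I_sq
  · linear_combination (t : ℂ) * I_sq
  · linear_combination (ζ.1 : ℂ) * I_sq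

theorem re_ne_zero_of_mem_spectrum_neg_inv_mul_tangentialSymbol
    (hA : ∀ ξ : Fin (m + 1) → ℝ, ∀ μ ∈ spectrum ℂ (cmap (∑ j, ξ j • A j)), μ.im = 0)
    (hdet : (A (Fin.last m)).det ≠ 0) {ζ : Freq m} (hγ : ζ.2.2 ≠ 0) {μ : ℂ}
    (hμ : μ ∈ spectrum ℂ (-((cmap (A (Fin.last m)))⁻¹ * tangentialSymbol A ζ))) : μ.re ≠ 0 := by
  -- A purely imaginary eigenvalue `i t` would make `-τ + i γ` an eigenvalue of `Σ ξ_j A_j` at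
  -- `ξ = (η, t)`.
  intro hre
  obtain ⟨v, hv₀, hv⟩ := mem_spectrum_iff_exists_mulVec_eq_smul.1 hμ
  have hμ_eq : μ = I * μ.im := by apply Complex.ext <;> simp [hre]
  have hunit := (isUnit_iff_isUnit_det _).1 (isUnit_cmap hdet)
  have hsymbol : tangentialSymbol A ζ *ᵥ v = -((I * μ.im) • cmap (A (Fin.last m)) *ᵥ v) := by
    rw [← hμ_eq, ← mulVec_smul, ← hv, neg_mulVec, mulVec_neg, neg_neg, mulVec_mulVec,
      mul_nonsing_inv_cancel_left _ _ hunit]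
  have him := hA _ _ (mem_spectrum_iff_exists_mulVec_eq_smul.2
    ⟨v, hv₀, mulVec_cmap_sum_snoc_smul hsymbol⟩)
  exact hγ (by simpa using him)

theorem HypH1.im_eq_zero {M : ℕ} {𝒪 : Set (Fin M → ℝ)}
    {A : Fin (m + 1) → (Fin M → ℝ) → Matrix (Fin N) (Fin N) ℝ} (h : HypH1 𝒪 A) {p : Fin M → ℝ}
    (hp : p ∈ 𝒪) (ξ : Fin (m + 1) → ℝ) {μ : ℂ}
    (hμ : μ ∈ spectrum ℂ (cmap (∑ j, ξ j • A j p))) : μ.im = 0 := by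
  obtain ⟨_, h⟩ := h
  by_cases hξ : ξ = 0
  · obtain ⟨v, hv₀, hv⟩ := mem_spectrum_iff_exists_mulVec_eq_smul.1 hμ
    have hμv : μ • v = 0 := by rw [← hv, cmap_sum_smul]; simp [hξ]
    rw [(smul_eq_zero_iff_left hv₀).1 hμv, zero_im]
  · exact (h p hp ξ hξ).1 μ hμ

theorem HypH2.exists_le_re {M : ℕ} {𝒪 : Set (Fin M → ℝ)}
    {A : Fin (m + 1) → (Fin M → ℝ) → Matrix (Fin N) (Fin N) ℝ}
    {B : Fin (m + 1) → Fin (m + 1) → (Fin M → ℝ) → Matrix (Fin N) (Fin N) ℝ}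
    (h : HypH2 𝒪 A B) {p : Fin M → ℝ} (hp : p ∈ 𝒪) :
    ∃ c > (0 : ℝ), ∀ t : ℝ, ∀ μ ∈ spectrum ℂ ((I * t) • cmap (A (Fin.last m) p) +
      (t : ℂ) ^ 2 • cmap (B (Fin.last m) (Fin.last m) p)), c * t ^ 2 ≤ μ.re := by
  obtain ⟨c, hc, h⟩ := h
  refine ⟨c, hc, fun t μ => ?_⟩
  simpa [Pi.single_apply, apply_ite ((↑) : ℝ → ℂ), ite_smul, -Complex.coe_smul, ← sq]
    using h p hp (Pi.single (Fin.last m) t) μ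

end Symbols

section Smoothness

open scoped Matrix.Norms.Operator

variable {E : Type*} [NormedAddCommGroup E] [NormedSpace ℝ E] {k : WithTop ℕ∞} {x : E}

@[fun_prop]
theorem contDiff_ofReal : ContDiff ℝ k ((↑) : ℝ → ℂ) :=
  ofRealCLM.contDiff

theorem contDiffAt_matrix_iff {n : Type*} [Fintype n] {F : E → Matrix n n ℂ} :
    ContDiffAt ℝ k F x ↔ ∀ i j, ContDiffAt ℝ k (fun y => F y i j) x := by
  let e : Matrix n n ℂ ≃L[ℝ] (n → n → ℂ) := (ofLinearEquiv ℝ).symm.toContinuousLinearEquiv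
  rw [← e.comp_contDiffAt_iff, contDiffAt_pi]
  simp only [contDiffAt_pi]
  rfl

variable {N m : ℕ} {A : Fin (m + 1) → E → Matrix (Fin N) (Fin N) ℝ}
  {B : Fin (m + 1) → Fin (m + 1) → E → Matrix (Fin N) (Fin N) ℝ} {ζ : E → Freq m} {ρ : E → ℝ}

theorem contDiffAt_cmap {F : E → Matrix (Fin N) (Fin N) ℝ}
    (hF : ∀ i j, ContDiffAt ℝ k (fun y => F y i j) x) :
    ContDiffAt ℝ k (fun y => cmap (F y)) x :=
  contDiffAt_matrix_iff.2 fun i j => contDiff_ofReal.contDiffAt.comp x (hF i j)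

theorem contDiffAt_calA (hA : ∀ j, ContDiffAt ℝ k (fun y => cmap (A j y)) x)
    (hB : ∀ j l, ContDiffAt ℝ k (fun y => cmap (B j l y)) x) (hζ : ContDiffAt ℝ k ζ x)
    (hunit : IsUnit (cmap (B (Fin.last m) (Fin.last m) x))) :
    ContDiffAt ℝ k (fun y => calA (fun j => A j y) (fun j l => B j l y) (ζ y)) x := by
  have hinv := contDiffAt_matrix_inv (hB _ _) hunit
  unfold calA
  refine hinv.mul ((hA _).sub (.sum fun j _ => ?_))
  fun_prop

theorem contDiffAt_calMRescaled (hA : ∀ j, ContDiffAt ℝ k (fun y => cmap (A j y)) x)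
    (hB : ∀ j l, ContDiffAt ℝ k (fun y => cmap (B j l y)) x) (hζ : ContDiffAt ℝ k ζ x)
    (hρ : ContDiffAt ℝ k ρ x) (hunit : IsUnit (cmap (B (Fin.last m) (Fin.last m) x))) :
    ContDiffAt ℝ k
      (fun y => calMRescaled (fun j => A j y) (fun j l => B j l y) (ζ y) (ρ y)) x := by
  have hinv := contDiffAt_matrix_inv (hB _ _) hunit
  unfold calMRescaled tangentialSymbol
  refine hinv.mul (.add (.add ?_ (.sum fun j _ => ?_))
    (hρ.smul (.sum fun j _ => .sum fun l _ => ?_))) <;>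
  fun_prop

end Smoothness

section Extension

open Filter Topology
open scoped Matrix.Norms.Operator

theorem eventually_contDiffAt_comp {𝕜 E F G : Type*} [NontriviallyNormedField 𝕜]
    [NormedAddCommGroup E] [NormedSpace 𝕜 E] [NormedAddCommGroup F] [NormedSpace 𝕜 F]
    [NormedAddCommGroup G] [NormedSpace 𝕜 G]
    {k : WithTop ℕ∞} {Φ : E → F} {Q : F → G} {x₀ : E} (hΦ : ∀ᶠ x in 𝓝 x₀, ContDiffAt 𝕜 k Φ x)
    (hQ : ContDiffAt 𝕜 ω Q (Φ x₀)) : ∀ᶠ x in 𝓝 x₀, ContDiffAt 𝕜 k (fun y => Q (Φ y)) x := by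
  filter_upwards [hΦ, hΦ.self_of_nhds.continuousAt.eventually (hQ.eventually (by simp))]
    with x hΦx hQx
  exact (hQx.of_le le_top).comp x hΦx

/-- The data `(ρ⁻¹ ℳ(p, ρ ζ), 𝒜(p, ρ ζ), ρ)` determining `𝒢(p, ρ ζ)`, regular at `ρ = 0`. -/
noncomputable def rescaledBlocks {N m : ℕ} (A : Fin (m + 1) → Matrix (Fin N) (Fin N) ℝ)
    (B : Fin (m + 1) → Fin (m + 1) → Matrix (Fin N) (Fin N) ℝ) (ζ : Freq m) (ρ : ℝ) :
    Matrix (Fin N) (Fin N) ℂ × Matrix (Fin N) (Fin N) ℂ × ℝ :=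
  (calMRescaled A B ζ ρ, calA A B (ρ • ζ), ρ)

theorem calG_smul {N m : ℕ} (A : Fin (m + 1) → Matrix (Fin N) (Fin N) ℝ)
    (B : Fin (m + 1) → Fin (m + 1) → Matrix (Fin N) (Fin N) ℝ) (ζ : Freq m) (ρ : ℝ) :
    calG A B (ρ • ζ) =
      fromBlocks 0 1 ((rescaledBlocks A B ζ ρ).2.2 • (rescaledBlocks A B ζ ρ).1)
        (rescaledBlocks A B ζ ρ).2.1 := by
  rw [calG, calM_smul, rescaledBlocks]

theorem eventually_contDiffAt_rescaledBlocks {E : Type*} [NormedAddCommGroup E]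
    [NormedSpace ℝ E] {k : WithTop ℕ∞} {N m : ℕ} {𝒪 : Set E} (hO : IsOpen 𝒪)
    {A : Fin (m + 1) → E → Matrix (Fin N) (Fin N) ℝ}
    {B : Fin (m + 1) → Fin (m + 1) → E → Matrix (Fin N) (Fin N) ℝ}
    (hA : ∀ j i l, ContDiffOn ℝ k (fun p => A j p i l) 𝒪)
    (hB : ∀ j j' i l, ContDiffOn ℝ k (fun p => B j j' p i l) 𝒪) {x₀ : E × Freq m × ℝ}
    (hx₀ : x₀.1 ∈ 𝒪) (hunit : IsUnit (cmap (B (Fin.last m) (Fin.last m) x₀.1))) :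
    ∀ᶠ x in 𝓝 x₀, ContDiffAt ℝ k (fun y : E × Freq m × ℝ =>
      rescaledBlocks (fun j => A j y.1) (fun j j' => B j j' y.1) y.2.1 y.2.2) x := by
  have hcmapB {x : E × Freq m × ℝ} (hx : x.1 ∈ 𝒪) (j j') :
      ContDiffAt ℝ k (fun y : E × Freq m × ℝ => cmap (B j j' y.1)) x :=
    contDiffAt_cmap fun i l => ((hB j j' i l).contDiffAt (hO.mem_nhds hx)).comp x contDiffAt_fst
  have hcmapA {x : E × Freq m × ℝ} (hx : x.1 ∈ 𝒪) (j) :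
      ContDiffAt ℝ k (fun y : E × Freq m × ℝ => cmap (A j y.1)) x :=
    contDiffAt_cmap fun i l => ((hA j i l).contDiffAt (hO.mem_nhds hx)).comp x contDiffAt_fst
  have hev𝒪 : ∀ᶠ x in 𝓝 x₀, x.1 ∈ 𝒪 := continuousAt_fst (hO.mem_nhds hx₀)
  have hevunit : ∀ᶠ x in 𝓝 x₀, IsUnit (cmap (B (Fin.last m) (Fin.last m) x.1)) :=
    (hcmapB hx₀ _ _).continuousAt (Units.isOpen.mem_nhds hunit)
  filter_upwards [hev𝒪, hevunit] with x hx hunitx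
  exact (contDiffAt_calMRescaled (hcmapA hx) (hcmapB hx) contDiffAt_snd.fst contDiffAt_snd.snd
    hunitx).prodMk ((contDiffAt_calA (hcmapA hx) (hcmapB hx)
      (contDiffAt_snd.snd.smul contDiffAt_snd.fst) hunitx).prodMk contDiffAt_snd.snd)

theorem exists_contDiffAt_isStableProjection_of_rescaledBlocks {N m : ℕ}
    {A : Fin (m + 1) → Matrix (Fin N) (Fin N) ℝ}
    {B : Fin (m + 1) → Fin (m + 1) → Matrix (Fin N) (Fin N) ℝ} {ζ : Freq m} {c : ℝ} (hc : 0 < c)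
    (hyp : ∀ ξ : Fin (m + 1) → ℝ, ∀ μ ∈ spectrum ℂ (cmap (∑ j, ξ j • A j)), μ.im = 0)
    (par : ∀ t : ℝ, ∀ μ ∈ spectrum ℂ ((I * t) • cmap (A (Fin.last m)) +
      (t : ℂ) ^ 2 • cmap (B (Fin.last m) (Fin.last m))), c * t ^ 2 ≤ μ.re)
    (hdet : (A (Fin.last m)).det ≠ 0) (hγ : ζ.2.2 ≠ 0) :
    ∃ Q : Matrix (Fin N) (Fin N) ℂ × Matrix (Fin N) (Fin N) ℂ × ℝ →
        Matrix (Fin N ⊕ Fin N) (Fin N ⊕ Fin N) ℂ,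
      ContDiffAt ℝ ω Q (rescaledBlocks A B ζ 0) ∧
      ∀ᶠ y in 𝓝 (rescaledBlocks A B ζ 0), 0 < y.2.2 →
        IsStableProjection (fromBlocks 0 1 (y.2.2 • y.1) y.2.1) (Q y) := by
  have hcalA : calA A B 0 =
      (cmap (B (Fin.last m) (Fin.last m)))⁻¹ * cmap (A (Fin.last m)) := by
    simp [calA]
  have hcalM : (calA A B 0)⁻¹ * calMRescaled A B ζ 0 =
      (cmap (A (Fin.last m)))⁻¹ * tangentialSymbol A ζ := by
    rw [hcalA, calMRescaled, inv_mul_inv_mul_inv_mul (isUnit_of_spectrum_re_ge hc par), zero_smul,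
      add_zero]
  rw [rescaledBlocks, zero_smul]
  refine exists_contDiffAt_isStableProjection_fromBlocks (fun μ hμ => ?_) fun μ hμ => ?_
  · exact re_ne_zero_of_mem_spectrum_inv_mul hc (isUnit_cmap hdet) par (hcalA ▸ hμ)
  · exact re_ne_zero_of_mem_spectrum_neg_inv_mul_tangentialSymbol hyp hdet hγ (hcalM ▸ hμ)

theorem stable_bundle_smooth_extension_gamma_pos_general {E : Type*} [NormedAddCommGroup E]
    [NormedSpace ℝ E] {k : WithTop ℕ∞} {N m : ℕ} {𝒪 : Set E} (hO : IsOpen 𝒪)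
    {A : Fin (m + 1) → E → Matrix (Fin N) (Fin N) ℝ}
    {B : Fin (m + 1) → Fin (m + 1) → E → Matrix (Fin N) (Fin N) ℝ}
    (hA : ∀ j i l, ContDiffOn ℝ k (fun p => A j p i l) 𝒪)
    (hB : ∀ j j' i l, ContDiffOn ℝ k (fun p => B j j' p i l) 𝒪) {p₀ : E} (hp₀ : p₀ ∈ 𝒪)
    (hyp : ∀ ξ : Fin (m + 1) → ℝ, ∀ μ ∈ spectrum ℂ (cmap (∑ j, ξ j • A j p₀)), μ.im = 0)
    (par : ∃ c > (0 : ℝ), ∀ t : ℝ, ∀ μ ∈ spectrum ℂ ((I * t) • cmap (A (Fin.last m) p₀) +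
      (t : ℂ) ^ 2 • cmap (B (Fin.last m) (Fin.last m) p₀)), c * t ^ 2 ≤ μ.re)
    (hdet : (A (Fin.last m) p₀).det ≠ 0) {ζ₀ : Freq m} (hγ₀ : ζ₀.2.2 ≠ 0) :
    ∃ Ω : Set (E × Freq m × ℝ), IsOpen Ω ∧ (p₀, ζ₀, (0 : ℝ)) ∈ Ω ∧ (∀ x ∈ Ω, x.1 ∈ 𝒪) ∧
    ∃ Proj : E × Freq m × ℝ → Matrix (Fin N ⊕ Fin N) (Fin N ⊕ Fin N) ℂ,
      (∀ i j, ContDiffOn ℝ k (fun x => Proj x i j) Ω) ∧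
      ∀ x ∈ Ω, 0 < x.2.2 → IsStableProjection
        (calG (fun j => A j x.1) (fun j j' => B j j' x.1) (x.2.2 • x.2.1)) (Proj x) := by
  obtain ⟨c, hc, par⟩ := par
  obtain ⟨Q, hQ, hstable⟩ :=
    exists_contDiffAt_isStableProjection_of_rescaledBlocks (A := fun j => A j p₀)
      (B := fun j j' => B j j' p₀) hc hyp par hdet hγ₀
  have hΦ := eventually_contDiffAt_rescaledBlocks hO hA hB (x₀ := (p₀, ζ₀, 0)) hp₀
    (isUnit_of_spectrum_re_ge hc par)
  have hev𝒪 : ∀ᶠ x in 𝓝 (p₀, ζ₀, (0 : ℝ)), x.1 ∈ 𝒪 := continuousAt_fst (hO.mem_nhds hp₀)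
  obtain ⟨Ω, hΩ, hΩopen, hmem⟩ := eventually_nhds_iff.1
    (hev𝒪.and ((eventually_contDiffAt_comp hΦ hQ).and
      (hΦ.self_of_nhds.continuousAt.eventually hstable)))
  refine ⟨Ω, hΩopen, hmem, fun x hx => (hΩ x hx).1, _,
    fun i j x hx => (contDiffAt_matrix_iff.1 (hΩ x hx).2.1 i j).contDiffWithinAt,
    fun x hx hρ => ?_⟩
  rw [calG_smul]
  exact (hΩ x hx).2.2 hρ

end Extension

noncomputable section

/-- Under (H0)–(H3), at points with `γ̲̌ > 0` the stable bundle
`(p, ζ̌, ρ) ↦ E₋(p, ρζ̌)` extends smoothly across `ρ = 0`: a smooth family of projectors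
realizes it for `ρ > 0`. -/
theorem stable_bundle_smooth_extension_gamma_pos {M N m : ℕ} (𝒪 : Set (Fin M → ℝ))
    (hO : IsOpen 𝒪)
    (A : Fin (m + 1) → (Fin M → ℝ) → Matrix (Fin N) (Fin N) ℝ)
    (B : Fin (m + 1) → Fin (m + 1) → (Fin M → ℝ) → Matrix (Fin N) (Fin N) ℝ)
    (h0 : HypH0 𝒪 A B) (h1 : HypH1 𝒪 A) (h2 : HypH2 𝒪 A B) (h3 : HypH3 𝒪 A)
    (p₀ : Fin M → ℝ) (hp₀ : p₀ ∈ 𝒪) (ζ₀ : Freq m) (hζ₀ : ζ₀ ≠ 0) (hγ₀ : 0 < ζ₀.2.2) :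
    ∃ Ω : Set ((Fin M → ℝ) × Freq m × ℝ), IsOpen Ω ∧ (p₀, ζ₀, (0 : ℝ)) ∈ Ω ∧
      (∀ x ∈ Ω, x.1 ∈ 𝒪) ∧
    ∃ Proj : (Fin M → ℝ) × Freq m × ℝ → Matrix (Fin N ⊕ Fin N) (Fin N ⊕ Fin N) ℂ,
      (∀ i j, ContDiffOn ℝ ∞ (fun x => Proj x i j) Ω) ∧
      ∀ x ∈ Ω, 0 < x.2.2 →
        (Matrix.toLin' (Proj x) ∘ₗ Matrix.toLin' (Proj x) = Matrix.toLin' (Proj x)) ∧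
        LinearMap.range (Matrix.toLin' (Proj x)) =
          stableSubspace
            (Matrix.toLin' (calG (fun j => A j x.1) (fun j k => B j k x.1) (x.2.2 • x.2.1))) ∧
        LinearMap.ker (Matrix.toLin' (Proj x)) =
          unstableSubspace
            (Matrix.toLin' (calG (fun j => A j x.1) (fun j k => B j k x.1) (x.2.2 • x.2.1))) := by
  obtain ⟨Ω, hΩ, hmem, hΩ𝒪, Proj, hsmooth, hProj⟩ :=
    stable_bundle_smooth_extension_gamma_pos_general hO h0.1 h0.2 hp₀
      (fun ξ _ => h1.im_eq_zero hp₀ ξ) (h2.exists_le_re hp₀) (h3 p₀ hp₀) hγ₀.ne'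
  exact ⟨Ω, hΩ, hmem, hΩ𝒪, Proj, hsmooth, fun x hx hρ =>
    ⟨(hProj x hx hρ).isIdempotentElem.map toLinAlgEquiv', (hProj x hx hρ).range_eq,
      (hProj x hx hρ).ker_eq⟩⟩

end
end

section
/- Let P ∈ M_n(ℂ) have no purely imaginary eigenvalue, let E₊ (resp. E₋) be the invariant subspace spanned by the generalized eigenvectors of P for eigenvalues with Re μ > 0 (resp. Re μ < 0), and let Π₊, Π₋ be the projections associated with the decomposition ℂⁿ = E₊ ⊕ E₋. Then for every κ ≥ 1 there exist a Hermitian matrix S ∈ M_n(ℂ) and a constant c > 0 such that ⟨S U, U⟩ ≥ κ² |Π₊U|² − |Π₋U|² for all U ∈ ℂⁿ and Re ⟨S P U, U⟩ ≥ c |U|² for all U ∈ ℂⁿ. -/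
open Matrix

noncomputable section

/-!
If `σ(a)` lies in `Re > 0`, then `b = 1 - ε a` has spectral radius `< 1` for small `ε > 0`, so
`‖bⁿ‖ < 1` for some `n`, and `t = ∑_{k<n} (bᵏ)* bᵏ` satisfies `t - b* t b = 1 - (bⁿ)* bⁿ > 0`.
Since `ε (a* t + t a) = t - b* t b + ε² a* t a`, this `t` solves the Lyapunov inequality
`a* t + t a > 0`, and so does every positive multiple of it. Applying this to `f` on the unstable
subspace, with the multiple chosen large, and to `-f` on the stable subspace, with the multiple
chosen small, gives the two diagonal blocks of the symmetrizer.
-/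

open Filter
open scoped InnerProductSpace Pointwise

-- The step `d / R ^ 2` minimizes the upper bound `1 - 2 * ε * d + ε ^ 2 * R ^ 2` over `ε`.
theorem norm_one_sub_smul_lt_one {d R : ℝ} {z : ℂ} (hd : 0 < d) (hR : 0 < R)
    (hre : d ≤ z.re) (hnorm : ‖z‖ ≤ R) : ‖1 - (d / R ^ 2) • z‖ < 1 := by
  set ε := d / R ^ 2
  have : 0 < ε := by positivity
  have hεR : ε * R ^ 2 = d := div_mul_cancel₀ d (by positivity)
  rw [← sq_lt_one_iff₀ (norm_nonneg _)]
  calc ‖1 - ε • z‖ ^ 2 = 1 - 2 * ε * z.re + ε ^ 2 * ‖z‖ ^ 2 := by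
        simp only [Complex.sq_norm, Complex.normSq_apply, Complex.sub_re, Complex.one_re,
          Complex.smul_re, Complex.sub_im, Complex.one_im, Complex.smul_im, smul_eq_mul]
        ring
    _ ≤ 1 - 2 * ε * d + ε ^ 2 * R ^ 2 := by gcongr
    _ = 1 - ε * d := by rw [sq ε, mul_assoc ε ε, hεR]; ring
    _ < 1 := sub_lt_self 1 (by positivity)

theorem exists_mem_spectrum_of_mem_spectrum_one_sub_smul {A : Type*} [Ring A] [Algebra ℂ A]
    {a : A} {ε : ℝ} (hε : ε ≠ 0) {μ : ℂ} (hμ : μ ∈ spectrum ℂ (1 - ε • a)) :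
    ∃ ν ∈ spectrum ℂ a, 1 - ε • ν = μ := by
  rw [← map_one (algebraMap ℂ A), ← spectrum.singleton_sub_eq, Set.singleton_sub] at hμ
  obtain ⟨_, hν, rfl⟩ := hμ
  have hsmul : spectrum ℂ (ε • a) = (ε : ℂ) • spectrum ℂ a := by
    simpa only [Units.smul_mk0, Complex.coe_smul] using
      spectrum.unit_smul_eq_smul a (Units.mk0 (ε : ℂ) (Complex.ofReal_ne_zero.2 hε))
  rw [hsmul] at hν
  obtain ⟨ν, hν, rfl⟩ := hν
  exact ⟨ν, hν, rfl⟩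

section BanachAlgebra

variable {A : Type*} [NormedRing A] [NormedAlgebra ℂ A] [CompleteSpace A]

theorem eventually_norm_pow_lt_one_of_spectralRadius_lt_one {a : A}
    (ha : spectralRadius ℂ a < 1) : ∀ᶠ n : ℕ in atTop, ‖a ^ n‖ < 1 := by
  have hroot : ∀ᶠ n : ℕ in atTop, (‖a ^ n‖₊ : ENNReal) ^ (1 / n : ℝ) < 1 :=
    (spectrum.pow_nnnorm_pow_one_div_tendsto_nhds_spectralRadius a).eventually_lt_const ha
  filter_upwards [hroot, eventually_gt_atTop 0] with n hn hn0
  by_contra! hge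
  exact hn.not_ge (ENNReal.one_le_rpow (by exact_mod_cast hge) (by positivity))

theorem exists_pos_spectralRadius_one_sub_smul_lt_one {a : A}
    (ha : ∀ μ ∈ spectrum ℂ a, 0 < μ.re) : ∃ ε > (0 : ℝ), spectralRadius ℂ (1 - ε • a) < 1 := by
  obtain ⟨d, hd, hre⟩ :=
    (spectrum.isCompact a).exists_forall_le' Complex.continuous_re.continuousOn ha
  obtain ⟨R, hR, hnorm⟩ := (spectrum.isCompact (𝕜 := ℂ) a).isBounded.exists_pos_norm_le
  have hε : 0 < d / R ^ 2 := by positivity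
  refine ⟨d / R ^ 2, hε, ?_⟩
  cases subsingleton_or_nontrivial A
  · simp [spectrum.SpectralRadius.of_subsingleton]
  refine spectrum.spectralRadius_lt_of_forall_lt _ fun μ hμ => ?_
  obtain ⟨ν, hν, rfl⟩ := exists_mem_spectrum_of_mem_spectrum_one_sub_smul hε.ne' hμ
  exact norm_one_sub_smul_lt_one hd hR (hre ν hν) (hnorm ν hν)

end BanachAlgebra

section Stein

variable {A : Type*} [Ring A] [StarRing A]

/-- The partial sum of the series `∑ (bᵏ)* bᵏ` solving the Stein equation `t - b* t b = 1`, the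
discrete-time analogue of the Lyapunov equation. -/
def steinSum (b : A) (n : ℕ) : A := ∑ k ∈ Finset.range n, star (b ^ k) * b ^ k

theorem steinSum_sub_conj (b : A) (n : ℕ) :
    steinSum b n - star b * steinSum b n * b = 1 - star (b ^ n) * b ^ n := by
  have hshift : star b * steinSum b n * b =
      ∑ k ∈ Finset.range n, star (b ^ (k + 1)) * b ^ (k + 1) := by
    simp only [steinSum, Finset.mul_sum, Finset.sum_mul, pow_succ, star_mul, mul_assoc]
  rw [hshift, steinSum, ← Finset.sum_sub_distrib,
    Finset.sum_range_sub' fun k => star (b ^ k) * b ^ k]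
  simp

end Stein

section CStarAlgebra

variable {A : Type*} [CStarAlgebra A] [PartialOrder A] [StarOrderedRing A]

theorem isStrictlyPositive_one_sub_star_mul_self {a : A} (ha : ‖a‖ < 1) :
    IsStrictlyPositive (1 - star a * a) := by
  have hgap : IsStrictlyPositive (algebraMap ℝ A (1 - ‖a‖ ^ 2)) :=
    isStrictlyPositive_algebraMap (by nlinarith [norm_nonneg a])
  refine hgap.of_le ?_
  rw [map_sub, map_one]
  exact sub_le_sub_left CStarAlgebra.star_mul_le_algebraMap_norm_sq 1

theorem one_le_steinSum (b : A) {n : ℕ} (hn : 0 < n) : 1 ≤ steinSum b n := by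
  simpa [steinSum] using Finset.single_le_sum (f := fun k => star (b ^ k) * b ^ k)
    (fun k _ => star_mul_self_nonneg (b ^ k)) (Finset.mem_range.2 hn)

theorem exists_one_le_isStrictlyPositive_sub_conj {b : A} (hb : spectralRadius ℂ b < 1) :
    ∃ t : A, 1 ≤ t ∧ IsStrictlyPositive (t - star b * t * b) := by
  obtain ⟨n, hn, hn0⟩ :=
    ((eventually_norm_pow_lt_one_of_spectralRadius_lt_one hb).and (eventually_gt_atTop 0)).exists
  refine ⟨steinSum b n, one_le_steinSum b hn0, ?_⟩
  rw [steinSum_sub_conj]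
  exact isStrictlyPositive_one_sub_star_mul_self hn

theorem exists_one_le_isStrictlyPositive_lyapunov {a : A} (ha : ∀ μ ∈ spectrum ℂ a, 0 < μ.re) :
    ∃ t : A, 1 ≤ t ∧ IsStrictlyPositive (star a * t + t * a) := by
  obtain ⟨ε, hε, hradius⟩ := exists_pos_spectralRadius_one_sub_smul_lt_one ha
  obtain ⟨t, ht, hstein⟩ := exists_one_le_isStrictlyPositive_sub_conj hradius
  have hconj : 0 ≤ ε ^ 2 • (star a * t * a) :=
    smul_nonneg (by positivity) (star_left_conjugate_nonneg (zero_le_one.trans ht) a)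
  have hexpand : star a * t + t * a =
      ε⁻¹ • (t - star (1 - ε • a) * t * (1 - ε • a) + ε ^ 2 • (star a * t * a)) := by
    rw [eq_inv_smul_iff₀ hε.ne']
    simp only [star_sub, star_one, star_smul, star_trivial, sub_mul, mul_sub, one_mul, mul_one,
      smul_mul_assoc, mul_smul_comm]
    module
  refine ⟨t, ht, ?_⟩
  rw [hexpand]
  exact (hstein.add_nonneg hconj).smul (inv_pos.2 hε)

theorem exists_algebraMap_le_isStrictlyPositive_lyapunov {a : A}
    (ha : ∀ μ ∈ spectrum ℂ a, 0 < μ.re) (r : ℝ) :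
    ∃ t : A, algebraMap ℝ A r ≤ t ∧ IsStrictlyPositive (star a * t + t * a) := by
  obtain ⟨t, ht, hpos⟩ := exists_one_le_isStrictlyPositive_lyapunov ha
  have hr : 0 < |r| + 1 := by positivity
  refine ⟨(|r| + 1) • t, ?_, ?_⟩
  · calc algebraMap ℝ A r ≤ algebraMap ℝ A (|r| + 1) :=
          algebraMap_mono A ((le_abs_self r).trans (le_add_of_nonneg_right zero_le_one))
      _ = (|r| + 1) • 1 := Algebra.algebraMap_eq_smul_one _
      _ ≤ (|r| + 1) • t := smul_le_smul_of_nonneg_left ht hr.le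
  · simpa only [mul_smul_comm, smul_mul_assoc, smul_add] using hpos.smul hr

theorem exists_le_one_isStrictlyPositive_lyapunov {a : A}
    (ha : ∀ μ ∈ spectrum ℂ a, 0 < μ.re) :
    ∃ t : A, t ≤ 1 ∧ IsStrictlyPositive (star a * t + t * a) := by
  obtain ⟨t, ht, hpos⟩ := exists_one_le_isStrictlyPositive_lyapunov ha
  have hr : 0 < ‖t‖ + 1 := by positivity
  refine ⟨(‖t‖ + 1)⁻¹ • t, ?_, ?_⟩
  · rw [inv_smul_le_iff_of_pos hr, ← Algebra.algebraMap_eq_smul_one]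
    exact ((IsSelfAdjoint.one A).of_ge ht).le_algebraMap_norm_self.trans
      (algebraMap_mono A (le_add_of_nonneg_right zero_le_one))
  · simpa only [mul_smul_comm, smul_mul_assoc, smul_add] using hpos.smul (inv_pos.2 hr)

end CStarAlgebra

section HilbertSpace

open ContinuousLinearMap

theorem re_inner_apply_self_mono {𝕜 H : Type*} [RCLike 𝕜] [NormedAddCommGroup H]
    [InnerProductSpace 𝕜 H] {a b : H →L[𝕜] H} (h : a ≤ b) (x : H) :
    RCLike.re ⟪a x, x⟫_𝕜 ≤ RCLike.re ⟪b x, x⟫_𝕜 := by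
  simpa only [_root_.sub_apply, inner_sub_left, map_sub, sub_nonneg] using
    ((ContinuousLinearMap.le_def a b).1 h).re_inner_nonneg_left x

theorem re_inner_algebraMap_apply_self {H : Type*} [NormedAddCommGroup H]
    [InnerProductSpace ℂ H] (r : ℝ) (x : H) :
    (⟪algebraMap ℝ (H →L[ℂ] H) r x, x⟫_ℂ).re = r * ‖x‖ ^ 2 := by
  rw [Algebra.algebraMap_eq_smul_one, _root_.smul_apply, one_apply_eq_self,
    inner_smul_left_eq_smul, Complex.smul_re, ← inner_self_eq_norm_sq (𝕜 := ℂ)]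
  rfl

variable {E : Type*} [NormedAddCommGroup E] [InnerProductSpace ℂ E]

/-- `S` is a symmetrizer of `f`: it is Hermitian and the real part of `⟪S (f x), x⟫` is
coercive. -/
structure IsSymmetrizer (S f : E →L[ℂ] E) : Prop where
  isSymmetric : S.IsSymmetric
  coercive : ∃ c > (0 : ℝ), ∀ x, c * ‖x‖ ^ 2 ≤ (⟪S (f x), x⟫_ℂ).re

variable [CompleteSpace E]

theorem exists_pos_mul_norm_sq_le_re_inner {b : E →L[ℂ] E} (hb : IsStrictlyPositive b) :
    ∃ c > (0 : ℝ), ∀ x, c * ‖x‖ ^ 2 ≤ (⟪b x, x⟫_ℂ).re := by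
  cases subsingleton_or_nontrivial E
  · exact ⟨1, one_pos, fun x => by simp [Subsingleton.elim x 0]⟩
  obtain ⟨c, hc, hle⟩ :=
    (CFC.exists_pos_algebraMap_le_iff hb.isSelfAdjoint).2 fun _ hr => hb.spectrum_pos hr
  refine ⟨c, hc, fun x => ?_⟩
  rw [← re_inner_algebraMap_apply_self]
  exact re_inner_apply_self_mono hle x

theorem isSymmetrizer_of_isStrictlyPositive {S f : E →L[ℂ] E} (hS : IsSelfAdjoint S)
    (h : IsStrictlyPositive (star f * S + S * f)) : IsSymmetrizer S f := by
  obtain ⟨c, hc, hle⟩ := exists_pos_mul_norm_sq_le_re_inner h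
  refine ⟨hS.isSymmetric, c / 2, half_pos hc, fun x => ?_⟩
  have hadjoint : (⟪star f (S x), x⟫_ℂ).re = (⟪S (f x), x⟫_ℂ).re := by
    rw [star_eq_adjoint, adjoint_inner_left, hS.isSymmetric.apply_clm, ← inner_conj_symm,
      Complex.conj_re]
  have hsum : (⟪(star f * S + S * f) x, x⟫_ℂ).re = 2 * (⟪S (f x), x⟫_ℂ).re := by
    rw [_root_.add_apply, inner_add_left, Complex.add_re, mul_apply_eq_comp, mul_apply_eq_comp,
      hadjoint, two_mul]
  linarith [hle x]

theorem exists_isSymmetrizer_mul_norm_sq_le {f : E →L[ℂ] E} (hf : ∀ μ ∈ spectrum ℂ f, 0 < μ.re)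
    (r : ℝ) : ∃ S, IsSymmetrizer S f ∧ ∀ x, r * ‖x‖ ^ 2 ≤ (⟪S x, x⟫_ℂ).re := by
  obtain ⟨S, hrS, hlyapunov⟩ := exists_algebraMap_le_isStrictlyPositive_lyapunov hf r
  have hS : IsSelfAdjoint S := ((IsSelfAdjoint.all r).algebraMap _).of_ge hrS
  refine ⟨S, isSymmetrizer_of_isStrictlyPositive hS hlyapunov, fun x => ?_⟩
  rw [← re_inner_algebraMap_apply_self]
  exact re_inner_apply_self_mono hrS x

theorem exists_isSymmetrizer_le_norm_sq {f : E →L[ℂ] E} (hf : ∀ μ ∈ spectrum ℂ f, 0 < μ.re) :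
    ∃ S, IsSymmetrizer S f ∧ ∀ x, (⟪S x, x⟫_ℂ).re ≤ ‖x‖ ^ 2 := by
  obtain ⟨S, hS1, hlyapunov⟩ := exists_le_one_isStrictlyPositive_lyapunov hf
  have hS : IsSelfAdjoint S := (IsSelfAdjoint.one _).of_le hS1
  refine ⟨S, isSymmetrizer_of_isStrictlyPositive hS hlyapunov, fun x => ?_⟩
  rw [← inner_self_eq_norm_sq (𝕜 := ℂ)]
  exact re_inner_apply_self_mono hS1 x

end HilbertSpace

section BlockDecomposition

open ContinuousLinearMap

section RCLike

variable {𝕜 E : Type*} [RCLike 𝕜] [NormedAddCommGroup E] [InnerProductSpace 𝕜 E] [CompleteSpace E]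
  {p q : Submodule 𝕜 E} [CompleteSpace p] [CompleteSpace q]

/-- The operator `Tp ⊕ (-Tq)` on `E = p ⊕ q`, as a sesquilinear form. The complements `p` and `q`
need not be orthogonal, so the blocks are pulled back by the oblique projections and their
adjoints. -/
def blockDiff (h : p.IsTopCompl q) (Tp : p →L[𝕜] p) (Tq : q →L[𝕜] q) : E →L[𝕜] E :=
  adjoint (p.projectionOntoL q h) ∘L Tp ∘L p.projectionOntoL q h -
    adjoint (q.projectionOntoL p h.symm) ∘L Tq ∘L q.projectionOntoL p h.symm

theorem isSymmetric_blockDiff (h : p.IsTopCompl q) {Tp : p →L[𝕜] p} {Tq : q →L[𝕜] q}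
    (hTp : Tp.IsSymmetric) (hTq : Tq.IsSymmetric) : (blockDiff h Tp Tq).IsSymmetric :=
  ((hTp.isSelfAdjoint.adjoint_conj _).sub (hTq.isSelfAdjoint.adjoint_conj _)).isSymmetric

theorem inner_blockDiff_add_add (h : p.IsTopCompl q) (Tp : p →L[𝕜] p) (Tq : q →L[𝕜] q)
    (u₁ u₂ : p) (v₁ v₂ : q) :
    ⟪blockDiff h Tp Tq (u₁ + v₁), (u₂ + v₂ : E)⟫_𝕜 = ⟪Tp u₁, u₂⟫_𝕜 - ⟪Tq v₁, v₂⟫_𝕜 := by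
  have hp (y : p) (z : q) : p.projectionOntoL q h (y + z) = y := by simp
  have hq (y : p) (z : q) : q.projectionOntoL p h.symm (y + z) = z := by simp
  simp only [blockDiff, _root_.sub_apply, ContinuousLinearMap.comp_apply, inner_sub_left,
    adjoint_inner_left, hp, hq]

end RCLike

theorem norm_add_sq_le_two_mul {E : Type*} [SeminormedAddCommGroup E] (u v : E) :
    ‖u + v‖ ^ 2 ≤ 2 * (‖u‖ ^ 2 + ‖v‖ ^ 2) :=
  (pow_le_pow_left₀ (norm_nonneg _) (norm_add_le u v) 2).trans add_sq_le

variable {E : Type*} [NormedAddCommGroup E] [InnerProductSpace ℂ E] [CompleteSpace E]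
  {p q : Submodule ℂ E} [CompleteSpace p] [CompleteSpace q]

theorem isSymmetrizer_blockDiff (h : p.IsTopCompl q) {f : E →L[ℂ] E}
    (hp : ∀ x ∈ p, f x ∈ p) (hq : ∀ x ∈ q, f x ∈ q) {Tp : p →L[ℂ] p} {Tq : q →L[ℂ] q}
    (hTp : IsSymmetrizer Tp (f.restrict hp)) (hTq : IsSymmetrizer Tq (-f.restrict hq)) :
    IsSymmetrizer (blockDiff h Tp Tq) f := by
  obtain ⟨c, hc, hcoercive_p⟩ := hTp.coercive
  obtain ⟨d, hd, hcoercive_q⟩ := hTq.coercive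
  refine ⟨isSymmetric_blockDiff h hTp.isSymmetric hTq.isSymmetric, min c d / 2,
    half_pos (lt_min hc hd), fun x => ?_⟩
  obtain ⟨u, v, rfl⟩ : ∃ (u : p) (v : q), (u + v : E) = x :=
    ⟨p.projectionOntoL q h x, q.projectionOntoL p h.symm x, by
      simpa using congr($(Submodule.projectionL_add_projectionL_eq_id h) x)⟩
  have hf_add : f (u + v) = (f.restrict hp u : E) + f.restrict hq v := map_add f _ _
  calc min c d / 2 * ‖(u + v : E)‖ ^ 2
      ≤ min c d / 2 * (2 * (‖u‖ ^ 2 + ‖v‖ ^ 2)) := by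
        gcongr
        exact norm_add_sq_le_two_mul _ _
    _ = min c d * ‖u‖ ^ 2 + min c d * ‖v‖ ^ 2 := by ring
    _ ≤ c * ‖u‖ ^ 2 + d * ‖v‖ ^ 2 := by
        gcongr
        exacts [min_le_left c d, min_le_right c d]
    _ ≤ (⟪Tp (f.restrict hp u), u⟫_ℂ).re + (⟪Tq (-f.restrict hq v), v⟫_ℂ).re :=
        add_le_add (hcoercive_p u) (hcoercive_q v)
    _ = (⟪blockDiff h Tp Tq (f (u + v)), (u + v : E)⟫_ℂ).re := by
        rw [hf_add, inner_blockDiff_add_add, map_neg, inner_neg_left, Complex.sub_re,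
          Complex.neg_re, sub_eq_add_neg]

theorem exists_isSymmetrizer_of_isTopCompl (h : p.IsTopCompl q) {f : E →L[ℂ] E}
    (hp : ∀ x ∈ p, f x ∈ p) (hq : ∀ x ∈ q, f x ∈ q)
    (hspec_p : ∀ μ ∈ spectrum ℂ (f.restrict hp), 0 < μ.re)
    (hspec_q : ∀ μ ∈ spectrum ℂ (f.restrict hq), μ.re < 0) (r : ℝ) :
    ∃ S, IsSymmetrizer S f ∧
      ∀ u ∈ p, ∀ v ∈ q, r * ‖u‖ ^ 2 - ‖v‖ ^ 2 ≤ (⟪S (u + v), u + v⟫_ℂ).re := by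
  have hspec_neg : ∀ μ ∈ spectrum ℂ (-f.restrict hq), 0 < μ.re := fun μ hμ => by
    rw [← spectrum.neg_eq] at hμ
    simpa only [Complex.neg_re, neg_lt_zero] using hspec_q (-μ) hμ
  obtain ⟨Tp, hTp, hTp_ge⟩ := exists_isSymmetrizer_mul_norm_sq_le hspec_p r
  obtain ⟨Tq, hTq, hTq_le⟩ := exists_isSymmetrizer_le_norm_sq hspec_neg
  refine ⟨blockDiff h Tp Tq, isSymmetrizer_blockDiff h hp hq hTp hTq, fun u hu v hv => ?_⟩
  lift u to p using hu
  lift v to q using hv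
  rw [inner_blockDiff_add_add, Complex.sub_re]
  exact sub_le_sub (hTp_ge u) (hTq_le v)

end BlockDecomposition

section SpectralSubspace

variable {K V : Type*} [Field K] [AddCommGroup V] [Module K V]

/-- The sum of the generalized eigenspaces of `f` for the eigenvalues in `s`; it gives
`unstableSubspace` and `stableSubspace` when `s` is an open half-plane. -/
def spectralSubspace (f : Module.End K V) (s : Set K) : Submodule K V :=
  ⨆ μ ∈ s, f.maxGenEigenspace μ

theorem apply_mem_spectralSubspace (f : Module.End K V) (s : Set K) :
    ∀ x ∈ spectralSubspace f s, f x ∈ spectralSubspace f s := by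
  change spectralSubspace f s ≤ (spectralSubspace f s).comap f
  exact iSup₂_le fun μ hμ _ hx => le_biSup f.maxGenEigenspace hμ
    (Module.End.mapsTo_maxGenEigenspace_of_comm (Commute.refl f) μ hx)

theorem mem_of_hasEigenvalue_restrict_spectralSubspace {f : Module.End K V} {s : Set K} {μ : K}
    (hμ : Module.End.HasEigenvalue (f.restrict (apply_mem_spectralSubspace f s)) μ) : μ ∈ s := by
  by_contra hμs
  obtain ⟨x, hx⟩ := hμ.exists_hasEigenvector
  have happly : f x = μ • (x : V) := congrArg Subtype.val hx.apply_eq_smul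
  have hmem : (x : V) ∈ f.maxGenEigenspace μ :=
    Module.End.eigenspace_le_maxGenEigenspace (Module.End.mem_eigenspace_iff.2 happly)
  have hdisjoint : Disjoint (f.maxGenEigenspace μ) (spectralSubspace f s) :=
    f.independent_maxGenEigenspace.disjoint_biSup hμs
  exact hx.2 (Subtype.ext (Submodule.disjoint_def.1 hdisjoint x hmem x.2))

theorem maxGenEigenspace_eq_bot_iff {f : Module.End K V} {μ : K} :
    f.maxGenEigenspace μ = ⊥ ↔ ¬ f.HasEigenvalue μ :=
  (not_iff_comm.1 (Module.End.hasUnifEigenvalue_iff_hasUnifEigenvalue_one ENat.top_pos)).symm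

theorem isCompl_spectralSubspace [IsAlgClosed K] [FiniteDimensional K V] {f : Module.End K V}
    {s t : Set K} (hst : Disjoint s t) (hcover : ∀ μ, f.HasEigenvalue μ → μ ∈ s ∪ t) :
    IsCompl (spectralSubspace f s) (spectralSubspace f t) := by
  refine ⟨f.independent_maxGenEigenspace.disjoint_biSup_biSup hst, codisjoint_iff_le_sup.2 ?_⟩
  rw [← f.iSup_maxGenEigenspace_eq_top, spectralSubspace, spectralSubspace, ← iSup_union]
  refine iSup_le fun μ => ?_
  by_cases hμ : f.HasEigenvalue μ
  · exact le_biSup f.maxGenEigenspace (hcover μ hμ)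
  · rw [maxGenEigenspace_eq_bot_iff.2 hμ]
    exact bot_le

end SpectralSubspace

theorem exists_symmetrizer_of_spectral_gap_general {E : Type*} [NormedAddCommGroup E]
    [InnerProductSpace ℂ E] [FiniteDimensional ℂ E] (f : E →L[ℂ] E)
    (hf : ∀ μ ∈ spectrum ℂ f, μ.re ≠ 0) (r : ℝ) :
    ∃ S, IsSymmetrizer S f ∧
      ∀ u ∈ unstableSubspace (f : E →ₗ[ℂ] E), ∀ v ∈ stableSubspace (f : E →ₗ[ℂ] E),
        r * ‖u‖ ^ 2 - ‖v‖ ^ 2 ≤ (⟪S (u + v), u + v⟫_ℂ).re := by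
  have := FiniteDimensional.complete ℂ E
  have hspectrum {s : Set ℂ} : ∀ μ ∈ spectrum ℂ
      (f.restrict (apply_mem_spectralSubspace (f : E →ₗ[ℂ] E) s)), μ ∈ s := fun μ hμ => by
    rw [ContinuousLinearMap.spectrum_eq] at hμ
    exact mem_of_hasEigenvalue_restrict_spectralSubspace (.of_mem_spectrum hμ)
  have hcompl :
      IsCompl (unstableSubspace (f : E →ₗ[ℂ] E)) (stableSubspace (f : E →ₗ[ℂ] E)) := by
    have hdisjoint : Disjoint {μ : ℂ | 0 < μ.re} {μ : ℂ | μ.re < 0} :=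
      Set.disjoint_left.2 fun μ (hpos : 0 < μ.re) => hpos.not_gt
    refine isCompl_spectralSubspace hdisjoint fun μ hμ => ?_
    rw [Module.End.hasEigenvalue_iff_mem_spectrum, ← ContinuousLinearMap.spectrum_eq] at hμ
    exact (hf μ hμ).lt_or_gt.symm
  exact exists_isSymmetrizer_of_isTopCompl
    (Submodule.IsCompl.isTopCompl_of_isClosed_of_finiteDimensional hcompl
      (Submodule.closed_of_finiteDimensional _))
    _ _ hspectrum hspectrum r

/-- A matrix with no purely imaginary eigenvalue admits, for each `κ ≥ 1`,
a Hermitian symmetrizer which is bounded below by `κ²|Π₊U|² − |Π₋U|²` on the decomposition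
`ℂⁿ = E₊ ⊕ E₋` and makes `Re ⟨S P U, U⟩` coercive. -/
theorem exists_symmetrizer_of_spectral_gap {n : ℕ}
    (P : Matrix (Fin n) (Fin n) ℂ)
    (hP : ∀ μ ∈ spectrum ℂ P, μ.re ≠ 0)
    (κ : ℝ) (hκ : 1 ≤ κ) :
    ∃ S : Matrix (Fin n) (Fin n) ℂ, Sᴴ = S ∧ ∃ c > (0 : ℝ),
      (∀ Up ∈ unstableSubspace (Matrix.toEuclideanLin P),
        ∀ Um ∈ stableSubspace (Matrix.toEuclideanLin P),
          κ ^ 2 * ‖Up‖ ^ 2 - ‖Um‖ ^ 2 ≤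
            (inner ℂ (Matrix.toEuclideanLin S (Up + Um)) (Up + Um) : ℂ).re) ∧
      ∀ U : EuclideanSpace ℂ (Fin n),
        c * ‖U‖ ^ 2 ≤ (inner ℂ (Matrix.toEuclideanLin (S * P) U) U : ℂ).re := by
  let Φ := Matrix.toEuclideanCLM (n := Fin n) (𝕜 := ℂ)
  obtain ⟨S, ⟨hS, c, hc, hcoercive⟩, hbound⟩ := exists_symmetrizer_of_spectral_gap_general (Φ P)
    (by rwa [AlgEquiv.spectrum_eq Φ P]) (κ ^ 2)
  obtain ⟨S, rfl⟩ := Φ.surjective S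
  refine ⟨S, Φ.injective ((map_star Φ S).trans hS.isSelfAdjoint), c, hc, hbound, fun U => ?_⟩
  rw [← Matrix.coe_toEuclideanCLM_eq_toEuclideanLin, map_mul]
  exact hcoercive U

end
end

section
/- Let ν ≥ 1, ξ ∈ ℝ, q ∈ ℝ with q ≠ 0, and γ > 0. Let N_ν ∈ M_ν(ℂ) be the nilpotent Jordan block with ones on the superdiagonal, let E_{ν,1} be the matrix with a single entry 1 in position (ν, 1), and set M = i(ξ Id + N_ν) + γ q E_{ν,1}. Then M has no purely imaginary eigenvalue, and the number of eigenvalues of M with Re μ < 0, counted with algebraic multiplicity, equals β, where β = ν/2 if ν is even, β = (ν − 1)/2 if ν is odd and q > 0, and β = (ν + 1)/2 if ν is odd and q < 0. -/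
open Matrix

noncomputable section

/-- The `ν × ν` nilpotent Jordan block, with ones on the superdiagonal. -/
def jordanBlock (ν : ℕ) : Matrix (Fin ν) (Fin ν) ℂ :=
  Matrix.of fun i j => if (j : ℕ) = (i : ℕ) + 1 then 1 else 0

/-- The `ν × ν` matrix with a single entry `1` in the bottom-left position `(ν, 1)`. -/
def cornerMatrix (ν : ℕ) : Matrix (Fin ν) (Fin ν) ℂ :=
  Matrix.of fun i j => if (i : ℕ) = ν - 1 ∧ (j : ℕ) = 0 then 1 else 0

/-!
The matrix `N_ν - i c E_{ν,1}` is the companion matrix of `z ^ ν + i c`, so the eigenvalues of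
`i (ξ Id + N_ν) + c E_{ν,1}` are the `i (ξ + z)`, where `z` runs over the `ν`-th roots of `-i c`,
and `Re μ = -Im z`. None of these roots is real because `-i c` is not. If `θ ∈ (0, 2π)` is an
argument of `-i c`, then the roots have the arguments `(θ + 2πk) / ν ∈ (0, 2π)` for `0 ≤ k < ν`, and
those with `Im z > 0` are the ones whose argument lies below `π`. There are `⌈(ν - θ / π) / 2⌉` of
them, a number that depends on `θ` only through the half-plane containing `-i c`.
-/

open Polynomial

section Superdiagonal

variable {R : Type*} [AddCommMonoid R] {m : ℕ}

/-- The square matrix with superdiagonal `b` and zeros elsewhere. Its size is one more than the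
length of `b`; it serves to write cyclic bidiagonal matrices with arbitrary entries. -/
def superdiagonal (b : Fin m → R) : Matrix (Fin (m + 1)) (Fin (m + 1)) R :=
  ∑ k, single k.castSucc k.succ (b k)

theorem superdiagonal_apply_of_ne (b : Fin m → R) {i j : Fin (m + 1)}
    (hij : (j : ℕ) ≠ i + 1) : superdiagonal b i j = 0 := by
  rw [superdiagonal, Matrix.sum_apply]
  refine Finset.sum_eq_zero fun k _ => single_apply_of_ne _ _ _ _ _ ?_
  rintro ⟨rfl, rfl⟩
  simp at hij

theorem superdiagonal_castSucc_succ (b : Fin m → R) (k : Fin m) :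
    superdiagonal b k.castSucc k.succ = b k := by
  simp [superdiagonal, Matrix.sum_apply, single_apply]

theorem superdiagonal_const_apply (r : R) (i j : Fin (m + 1)) :
    superdiagonal (fun _ => r) i j = if (j : ℕ) = i + 1 then r else 0 := by
  split_ifs with hij
  · obtain ⟨k, rfl⟩ := Fin.exists_castSucc_eq.2 (show i ≠ Fin.last m by grind)
    obtain rfl : j = k.succ := Fin.ext hij
    exact superdiagonal_castSucc_succ _ k
  · exact superdiagonal_apply_of_ne _ hij

end Superdiagonal

theorem det_diagonal_add_superdiagonal_add_single {R : Type*} [CommRing R] {m : ℕ}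
    (a : Fin (m + 1) → R) (b : Fin m → R) (c : R) :
    (diagonal a + superdiagonal b + single (Fin.last m) 0 c).det =
      ∏ k, a k + (-1) ^ m * c * ∏ k, b k := by
  set A := diagonal a + superdiagonal b + single (Fin.last m) 0 c with hA
  have first_column (i : Fin (m + 1)) :
      A i 0 = (if i = 0 then a 0 else 0) + if i = Fin.last m then c else 0 := by
    rw [hA, Matrix.add_apply, Matrix.add_apply, superdiagonal_apply_of_ne b (by simp), add_zero]
    rcases eq_or_ne i 0 with rfl | hi <;> simp [single_apply, eq_comm, *]
  have other_columns (i : Fin (m + 1)) (j : Fin m) :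
      A i j.succ = diagonal a i j.succ + superdiagonal b i j.succ := by
    simp [hA, (Fin.succ_ne_zero j).symm]
  have first_minor : (A.submatrix Fin.succ Fin.succ).det = ∏ k : Fin m, a k.succ := by
    rw [det_of_isUpperTriangular]
    · simp [other_columns, superdiagonal_apply_of_ne]
    · intro i j (hji : j < i)
      have : superdiagonal b i.succ j.succ = 0 := superdiagonal_apply_of_ne _ (by grind)
      simp [other_columns, this, hji.ne']
  have last_minor : (A.submatrix Fin.castSucc Fin.succ).det = ∏ k, b k := by
    rw [det_of_isLowerTriangular]
    · simp [other_columns, superdiagonal_castSucc_succ, Fin.castSucc_lt_succ.ne]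
    · intro i j (hij : i < j)
      have : superdiagonal b i.castSucc j.succ = 0 := superdiagonal_apply_of_ne _ (by grind)
      simp [other_columns, this, show i.castSucc ≠ j.succ by grind]
  rw [det_succ_column_zero]
  simp only [first_column, mul_add, add_mul, mul_ite, ite_mul, mul_zero, zero_mul,
    Finset.sum_add_distrib, Finset.sum_ite_eq', Finset.mem_univ, if_true]
  rw [Fin.succAbove_zero, Fin.succAbove_last, first_minor, last_minor, Fin.prod_univ_succ]
  simp

theorem roots_X_sub_C_pow_sub_C {K : Type*} [Field K] {u : K} (hu : u ≠ 0) (n : ℕ) (w y : K) :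
    ((X - C w) ^ n - C (u ^ n * y)).roots = (nthRoots n y).map fun z => w + u * z := by
  have rescale : (X - C w) ^ n - C (u ^ n * y) =
      C (u ^ n) * (X ^ n - C y).comp (C u⁻¹ * X + C (-(u⁻¹ * w))) := by
    have affine : C u * (C u⁻¹ * X + C (-(u⁻¹ * w))) = X - C w := by
      rw [mul_add, ← mul_assoc, ← C_mul, ← C_mul, mul_neg, mul_inv_cancel₀ hu,
        mul_inv_cancel_left₀ hu, C_1, one_mul, C_neg, sub_eq_add_neg]
    rw [sub_comp, X_pow_comp, C_comp, mul_sub, C_pow, ← mul_pow, affine, C_mul, C_pow]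
  rw [rescale, roots_C_mul _ (pow_ne_zero n hu), roots_comp_C_mul_X_add_C _ _ _ (by simpa),
    nthRoots]
  refine Multiset.map_congr rfl fun z _ => ?_
  rw [Ring.inverse_eq_inv', inv_inv, sub_neg_eq_add, mul_add, mul_inv_cancel_left₀ hu, add_comm]

/-- The cyclic bidiagonal matrix `u (x Id + N_ν) + c E_{ν,1}`. The block of the theorem is the case
`u = i`, `x = ξ`, `c = γ q`. -/
def modelBlock (ν : ℕ) (u x c : ℂ) : Matrix (Fin ν) (Fin ν) ℂ :=
  u • (x • (1 : Matrix (Fin ν) (Fin ν) ℂ) + jordanBlock ν) + c • cornerMatrix ν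

theorem charmatrix_modelBlock (m : ℕ) (u x c : ℂ) :
    (modelBlock (m + 1) u x c).charmatrix =
      diagonal (fun _ => X - C (u * x)) + superdiagonal (fun _ => -C u) +
        single (Fin.last m) 0 (-C c) := by
  ext1 i j
  simp only [modelBlock, jordanBlock, cornerMatrix, charmatrix_apply, Matrix.add_apply,
    Matrix.smul_apply, Matrix.one_apply, of_apply, diagonal_apply, superdiagonal_const_apply,
    single_apply, smul_eq_mul, Fin.ext_iff, Fin.val_last, Fin.val_zero, Nat.add_sub_cancel,
    eq_comm (a := m), eq_comm (a := 0)]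
  split_ifs <;> simp <;> ring

theorem charpoly_modelBlock (m : ℕ) (u x c : ℂ) :
    (modelBlock (m + 1) u x c).charpoly = (X - C (u * x)) ^ (m + 1) - C (u ^ m * c) := by
  have sign : (-1 : ℂ[X]) ^ m * (-1) ^ m = 1 := by rw [← mul_pow]; simp
  rw [charpoly, charmatrix_modelBlock, det_diagonal_add_superdiagonal_add_single,
    Fin.prod_const, Fin.prod_const, neg_pow (C u), C_mul (a := u ^ m), C_pow]
  linear_combination (-C c * C u ^ m) * sign

theorem roots_charpoly_modelBlock (m : ℕ) {u : ℂ} (hu : u ≠ 0) (x c : ℂ) :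
    (modelBlock (m + 1) u x c).charpoly.roots =
      (nthRoots (m + 1) (c / u)).map fun z => u * (x + z) := by
  have constant_term : u ^ m * c = u ^ (m + 1) * (c / u) := by
    rw [pow_succ, mul_assoc, mul_div_cancel₀ _ hu]
  rw [charpoly_modelBlock, constant_term, roots_X_sub_C_pow_sub_C hu]
  simp only [mul_add]

section ImaginaryPart

open Complex

theorem im_ne_zero_of_im_pow_ne_zero {z : ℂ} {n : ℕ} (h : (z ^ n).im ≠ 0) : z.im ≠ 0 := by
  contrapose! h
  rw [← re_add_im z, h, ofReal_zero, zero_mul, add_zero, ← ofReal_pow, ofReal_im]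

theorem sin_pos_iff_lt_pi {x : ℝ} (hx : x ∈ Set.Ioo 0 (2 * Real.pi)) :
    0 < Real.sin x ↔ x < Real.pi := by
  refine ⟨fun hsin => ?_, Real.sin_pos_of_pos_of_lt_pi hx.1⟩
  contrapose! hsin
  rw [← Real.sin_sub_two_pi]
  exact Real.sin_nonpos_of_nonpos_of_neg_pi_le (by linarith [hx.2]) (by linarith)

theorem nthRoots_exp (n : ℕ) (w : ℂ) :
    nthRoots n (exp w) =
      (Multiset.range n).map fun k : ℕ => exp ((w + 2 * Real.pi * k * I) / n) := by
  obtain rfl | hn := eq_or_ne n 0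
  · simp
  have root : exp (w / n) ^ n = exp w := by
    rw [← exp_nat_mul, mul_div_cancel₀ _ (Nat.cast_ne_zero.2 hn)]
  rw [(isPrimitiveRoot_exp n hn).nthRoots_eq root]
  refine Multiset.map_congr rfl fun k _ => ?_
  rw [← exp_nat_mul, ← exp_add]
  congr 1
  ring

theorem im_exp_add_two_pi_mul_div_pos_iff {n k : ℕ} (hk : k < n) {w : ℂ}
    (hw : w.im ∈ Set.Ioo 0 (2 * Real.pi)) :
    0 < (exp ((w + 2 * Real.pi * k * I) / n)).im ↔ k < ⌈(n - w.im / Real.pi) / 2⌉₊ := by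
  have hn : (0 : ℝ) < n := by exact_mod_cast k.zero_le.trans_lt hk
  have hkn : (k : ℝ) + 1 ≤ n := by exact_mod_cast hk
  have im_eq : ((w + 2 * Real.pi * k * I) / n).im = (w.im + 2 * Real.pi * k) / n := by
    rw [← ofReal_natCast n, div_ofReal_im]
    simp
  have im_mem : (w.im + 2 * Real.pi * k) / n ∈ Set.Ioo 0 (2 * Real.pi) := by
    obtain ⟨im_pos, im_lt⟩ := hw
    have := Real.pi_pos
    refine ⟨by positivity, (div_lt_iff₀ hn).2 ?_⟩
    nlinarith
  calc 0 < (exp ((w + 2 * Real.pi * k * I) / n)).im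
      ↔ (w.im + 2 * Real.pi * k) / n < Real.pi := by
        rw [exp_im, im_eq, mul_pos_iff_of_pos_left (Real.exp_pos _), sin_pos_iff_lt_pi im_mem]
    _ ↔ w.im < (n - k * 2) * Real.pi := by
        rw [div_lt_iff₀ hn]
        constructor <;> intro h <;> linarith
    _ ↔ k < ⌈(n - w.im / Real.pi) / 2⌉₊ := by
        rw [Nat.lt_ceil, lt_div_iff₀ two_pos, lt_sub_comm, div_lt_iff₀ Real.pi_pos]

theorem card_nthRoots_exp_im_pos (n : ℕ) {w : ℂ} (hw : w.im ∈ Set.Ioo 0 (2 * Real.pi)) :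
    ((nthRoots n (exp w)).filter fun z => 0 < z.im).card = ⌈(n - w.im / Real.pi) / 2⌉₊ := by
  set N := ⌈(n - w.im / Real.pi) / 2⌉₊
  have hNn : N ≤ n := by
    have := div_pos hw.1 Real.pi_pos
    exact Nat.ceil_le.2 (by linarith [(n.cast_nonneg : (0 : ℝ) ≤ n)])
  rw [nthRoots_exp, Multiset.filter_map, Multiset.card_map]
  calc ((Multiset.range n).filter _).card
      = ((Finset.range n).filter fun k => k < N).card :=
        congrArg Multiset.card <| Multiset.filter_congr fun k hk =>
          im_exp_add_two_pi_mul_div_pos_iff (Multiset.mem_range.1 hk) hw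
    _ = (Finset.range N).card := by
        congr 1
        ext k
        simpa using fun hkN => hkN.trans_le hNn
    _ = N := Finset.card_range N

theorem natCeil_natCast_sub_div_two_of_lt_one {K : Type*} [Field K] [LinearOrder K]
    [IsStrictOrderedRing K] [FloorSemiring K] (n : ℕ) {δ : K} (hδ : δ ∈ Set.Ico 0 1) :
    ⌈(n - δ) / 2⌉₊ = (n + 1) / 2 := by
  obtain ⟨hδ0, hδ1⟩ := hδ
  refine eq_of_forall_lt_iff fun k => ?_
  have lt_iff : (k : K) * 2 < n - δ ↔ k * 2 + 1 ≤ n := by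
    refine ⟨fun h => ?_, fun h => ?_⟩
    · exact_mod_cast (show (k * 2 : K) < n by linarith)
    · linarith [show (k * 2 + 1 : K) ≤ n by exact_mod_cast h]
  rw [Nat.lt_ceil, lt_div_iff₀ two_pos, lt_iff]
  omega

theorem natCeil_natCast_sub_div_two_of_one_le {K : Type*} [Field K] [LinearOrder K]
    [IsStrictOrderedRing K] [FloorSemiring K] (n : ℕ) {δ : K} (hδ : δ ∈ Set.Ico 1 2) :
    ⌈(n - δ) / 2⌉₊ = n / 2 := by
  obtain ⟨hδ1, hδ2⟩ := hδ
  refine eq_of_forall_lt_iff fun k => ?_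
  have lt_iff : (k : K) * 2 < n - δ ↔ k * 2 + 2 ≤ n := by
    refine ⟨fun h => ?_, fun h => ?_⟩
    · exact_mod_cast (show (k * 2 + 1 : K) < n by linarith)
    · linarith [show (k * 2 + 2 : K) ≤ n by exact_mod_cast h]
  rw [Nat.lt_ceil, lt_div_iff₀ two_pos, lt_iff]
  omega

theorem card_nthRoots_im_pos_of_im_pos (n : ℕ) {y : ℂ} (hy : 0 < y.im) :
    ((nthRoots n y).filter fun z => 0 < z.im).card = (n + 1) / 2 := by
  have hpi := Real.pi_pos
  have hy0 : y ≠ 0 := fun h => by simp [h] at hy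
  have arg_pos : 0 < arg y :=
    (arg_nonneg_iff.2 hy.le).lt_of_ne' fun h => hy.ne' (arg_eq_zero_iff.1 h).2
  have arg_lt : arg y < Real.pi := arg_lt_pi_iff.2 (.inr hy.ne')
  have log_im_mem : (log y).im ∈ Set.Ioo 0 (2 * Real.pi) := by
    rw [log_im]
    exact ⟨arg_pos, by linarith⟩
  rw [← exp_log hy0, card_nthRoots_exp_im_pos n log_im_mem, log_im]
  exact natCeil_natCast_sub_div_two_of_lt_one n ⟨by positivity, (div_lt_one hpi).2 arg_lt⟩

theorem card_nthRoots_im_pos_of_im_neg (n : ℕ) {y : ℂ} (hy : y.im < 0) :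
    ((nthRoots n y).filter fun z => 0 < z.im).card = n / 2 := by
  have hpi := Real.pi_pos
  have hy0 : y ≠ 0 := fun h => by simp [h] at hy
  have arg_neg : arg y < 0 := arg_neg_iff.2 hy
  have arg_gt : -Real.pi < arg y := neg_pi_lt_arg y
  have im_eq : (log y + 2 * Real.pi * I).im = arg y + 2 * Real.pi := by simp [log_im]
  have im_mem : (log y + 2 * Real.pi * I).im ∈ Set.Ioo 0 (2 * Real.pi) := by
    rw [im_eq]
    constructor <;> linarith
  rw [← exp_log hy0, ← exp_periodic (log y), card_nthRoots_exp_im_pos n im_mem, im_eq]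
  refine natCeil_natCast_sub_div_two_of_one_le n ⟨(one_le_div hpi).2 ?_, (div_lt_iff₀ hpi).2 ?_⟩ <;>
    linarith

theorem re_ne_zero_of_mem_spectrum_modelBlock {m : ℕ} {x : ℝ} {c : ℂ} (hc : c.re ≠ 0) {μ : ℂ}
    (hμ : μ ∈ spectrum ℂ (modelBlock (m + 1) I x c)) : μ.re ≠ 0 := by
  rw [mem_spectrum_iff_isRoot_charpoly, ← mem_roots (charpoly_monic _).ne_zero,
    roots_charpoly_modelBlock m I_ne_zero] at hμ
  obtain ⟨z, hz, rfl⟩ := Multiset.mem_map.1 hμ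
  rw [mem_nthRoots m.succ_pos] at hz
  have : z.im ≠ 0 := im_ne_zero_of_im_pow_ne_zero (n := m + 1) (by simpa [hz] using hc)
  simpa using this

theorem card_roots_charpoly_modelBlock_re_neg (m : ℕ) (x : ℝ) {c : ℂ} (hc : c.re ≠ 0) :
    ((modelBlock (m + 1) I x c).charpoly.roots.filter fun μ => μ.re < 0).card =
      if 0 < c.re then (m + 1) / 2 else (m + 2) / 2 := by
  have re_neg_iff (z : ℂ) : (I * (x + z)).re < 0 ↔ 0 < z.im := by simp
  have im_div_I : (c / I).im = -c.re := by simp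
  rw [roots_charpoly_modelBlock m I_ne_zero, Multiset.filter_map, Multiset.card_map]
  simp only [Function.comp_def, re_neg_iff]
  split_ifs with hpos
  · exact card_nthRoots_im_pos_of_im_neg _ (im_div_I ▸ neg_lt_zero.2 hpos)
  · exact card_nthRoots_im_pos_of_im_pos _ (im_div_I ▸ neg_pos.2 (hc.lt_of_le (not_lt.1 hpos)))

theorem model_block_eigenvalue_count_general (ν : ℕ) (hν : 1 ≤ ν) (ξ : ℝ) {c : ℂ}
    (hc : c.re ≠ 0) :
    (∀ μ ∈ spectrum ℂ (modelBlock ν I ξ c), μ.re ≠ 0) ∧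
    ((modelBlock ν I ξ c).charpoly.roots.filter fun μ => μ.re < 0).card =
      if Even ν then ν / 2 else if 0 < c.re then (ν - 1) / 2 else (ν + 1) / 2 := by
  obtain ⟨m, rfl⟩ := Nat.exists_eq_add_of_le' hν
  refine ⟨fun μ => re_ne_zero_of_mem_spectrum_modelBlock hc, ?_⟩
  rw [card_roots_charpoly_modelBlock_re_neg m ξ hc]
  simp only [Nat.even_iff]
  split_ifs <;> omega

end ImaginaryPart

/-- Eigenvalue count for the model glancing block
`M = i(ξ Id + N_ν) + γ q E_{ν,1}`: no purely imaginary eigenvalue, and exactly `β`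
eigenvalues of negative real part (with multiplicity), where `β = ν/2` for `ν` even,
`β = (ν − 1)/2` for `ν` odd and `q > 0`, `β = (ν + 1)/2` for `ν` odd and `q < 0`. -/
theorem model_block_eigenvalue_count (ν : ℕ) (hν : 1 ≤ ν) (ξ q γ : ℝ)
    (hq : q ≠ 0) (hγ : 0 < γ) :
    (∀ μ ∈ spectrum ℂ
        (Complex.I • ((ξ : ℂ) • (1 : Matrix (Fin ν) (Fin ν) ℂ) + jordanBlock ν) +
          ((γ * q : ℝ) : ℂ) • cornerMatrix ν),
      μ.re ≠ 0) ∧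
    ((Complex.I • ((ξ : ℂ) • (1 : Matrix (Fin ν) (Fin ν) ℂ) + jordanBlock ν) +
          ((γ * q : ℝ) : ℂ) • cornerMatrix ν).charpoly.roots.filter
        (fun μ => μ.re < 0)).card =
      (if Even ν then ν / 2 else if 0 < q then (ν - 1) / 2 else (ν + 1) / 2) := by
  simpa only [modelBlock, Complex.ofReal_re, mul_pos_iff_of_pos_left hγ] using
    model_block_eigenvalue_count_general ν hν ξ (c := (γ * q : ℝ)) (mul_ne_zero hγ.ne' hq)

end
end

section
/- Under Assumptions (H0)–(H3), let Π be a continuous map on {(p, ζ̌, ρ) : p ∈ 𝒪, ζ̌ = (τ̌, η̌, γ̌) ∈ ℝ^{d+1} \ {0}, γ̌ ≥ 0, ρ ≥ 0} with values in M_{2N}(ℂ) such that for ρ > 0, Π(p, ζ̌, ρ) is the projection onto E₋(p, ρζ̌) along E₊(p, ρζ̌) (such Π exists by the main theorem). Let Γ be a continuous map from 𝒪 × ℝ^{d+1} to the N×2N complex matrices of rank N. If at some point (p̲, ζ̲̌) with ζ̲̌ ≠ 0 and γ̲̌ ≥ 0 one has ℂ^{2N} = range Π(p̲, ζ̲̌,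 0) ⊕ ker Γ(p̲, 0), then there is a neighborhood Ω of (p̲, ζ̲̌, 0) in ℝ^M × ℝ^{d+1} × ℝ such that for all (p, ζ̌, ρ) ∈ Ω with ρ > 0 and γ̌ ≥ 0, ℂ^{2N} = E₋(p, ρζ̌) ⊕ ker Γ(p, ρζ̌). -/
open Matrix Complex
open scoped ContDiff

noncomputable section

/-!
Nearby projectors `P` and boundary matrices `G` stay transverse because both halves of
`E = range P ⊕ ker G` are open conditions in disguise. For surjective `G`, `range P + ker G = E`
says that `G ∘ P` is surjective; for idempotent `P`, `range P` is the kernel of `1 - P`, so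
`range P ∩ ker G = 0` says that `(G, 1 - P)` is injective. In finite dimension injectivity and
surjectivity are both stable under small perturbations. Transversality gives these two conditions
for any `P`, so they can be read off at the limit `ρ = 0`; idempotency of the projectors at `ρ > 0`
turns them back into transversality.
-/

section Transversality

open Function LinearMap

variable {R E F : Type*} [Ring R] [AddCommGroup E] [Module R E] [AddCommGroup F] [Module R F]
  {P : Module.End R E} {G : E →ₗ[R] F}

theorem surjective_comp_iff_codisjoint_range_ker {H : Type*} [AddCommGroup H] [Module R H]
    {S : H →ₗ[R] E} (hG : Surjective G) :
    Surjective (G ∘ₗ S) ↔ Codisjoint (range S) (ker G) := by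
  rw [← range_eq_top, range_comp, map_eq_top_iff (range_eq_top.2 hG), codisjoint_iff]

theorem injective_prod_one_sub_of_disjoint_range_ker (h : Disjoint (range P) (ker G)) :
    Injective (G.prod (1 - P)) := by
  refine (injective_iff_map_eq_zero _).2 fun v hv => ?_
  obtain ⟨hGv, hPv⟩ : G v = 0 ∧ v - P v = 0 := Prod.mk.inj hv
  exact Submodule.disjoint_def.1 h v ⟨v, (sub_eq_zero.1 hPv).symm⟩ hGv

theorem disjoint_range_ker_of_injective_prod_one_sub (hP : IsIdempotentElem P)
    (h : Injective (G.prod (1 - P))) : Disjoint (range P) (ker G) := by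
  refine Submodule.disjoint_def.2 fun v hvP hvG => (injective_iff_map_eq_zero _).1 h v ?_
  have hPv : P v = v := hP.mem_range_iff.1 hvP
  exact Prod.ext hvG (sub_eq_zero.2 hPv.symm)

theorem isCompl_range_ker_of_injective_of_surjective (hP : IsIdempotentElem P)
    (hinj : Injective (G.prod (1 - P))) (hsurj : Surjective (G ∘ₗ P)) :
    IsCompl (range P) (ker G) :=
  have hG : Surjective G := Surjective.of_comp hsurj
  ⟨disjoint_range_ker_of_injective_prod_one_sub hP hinj,
    (surjective_comp_iff_codisjoint_range_ker hG).1 hsurj⟩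

end Transversality

section Perturbation

open Function Filter Topology LinearMap

variable {𝕜 E F α : Type*} [NontriviallyNormedField 𝕜] [CompleteSpace 𝕜]
  [NormedAddCommGroup E] [NormedSpace 𝕜 E] [NormedAddCommGroup F] [NormedSpace 𝕜 F] {l : Filter α}

theorem isOpen_setOf_surjective [FiniteDimensional 𝕜 F] :
    IsOpen {T : E →L[𝕜] F | Surjective T} := by
  have surjective_iff_le_rank (T : E →L[𝕜] F) :
      Surjective T ↔ (Module.finrank 𝕜 F : Cardinal) ≤ (T : E →ₗ[𝕜] F).rank := by
    rw [← ContinuousLinearMap.coe_coe, ← range_eq_top, LinearMap.rank, ← Module.finrank_eq_rank,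
      Nat.cast_le]
    exact ⟨fun h => by rw [h, finrank_top],
      fun h => Submodule.eq_top_of_finrank_eq ((Submodule.finrank_le _).antisymm h)⟩
  simpa only [surjective_iff_le_rank] using isOpen_setOfPred_nat_le_rank (Module.finrank 𝕜 F)

theorem isOpen_setOf_surjective_comp {H : Type*} [NormedAddCommGroup H] [NormedSpace 𝕜 H]
    [FiniteDimensional 𝕜 F] :
    IsOpen {q : (H →L[𝕜] E) × (E →L[𝕜] F) | Surjective (q.2 ∘L q.1)} :=
  isOpen_setOf_surjective.preimage (continuous_snd.clm_comp continuous_fst)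

theorem isOpen_setOf_injective_prod_one_sub [FiniteDimensional 𝕜 E] :
    IsOpen {q : (E →L[𝕜] E) × (E →L[𝕜] F) | Injective (q.2.prod (1 - q.1 : E →L[𝕜] E))} := by
  have hcont : Continuous fun q : (E →L[𝕜] E) × (E →L[𝕜] F) => q.2.prod (1 - q.1 : E →L[𝕜] E) :=
    (ContinuousLinearMap.prodₗᵢ 𝕜).continuous.comp
      (continuous_snd.prodMk (continuous_const.sub continuous_fst))
  exact ContinuousLinearMap.isOpen_injective.preimage hcont

theorem eventually_isCompl_range_ker [FiniteDimensional 𝕜 E]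
    {P : α → E →L[𝕜] E} {G : α → E →L[𝕜] F} {P₀ : E →L[𝕜] E} {G₀ : E →L[𝕜] F}
    (hP : Tendsto P l (𝓝 P₀)) (hG : Tendsto G l (𝓝 G₀))
    (hidem : ∀ᶠ x in l, IsIdempotentElem (P x : Module.End 𝕜 E)) (hG₀ : Surjective G₀)
    (h : IsCompl (range (P₀ : E →ₗ[𝕜] E)) (ker (G₀ : E →ₗ[𝕜] F))) :
    ∀ᶠ x in l, IsCompl (range (P x : E →ₗ[𝕜] E)) (ker (G x : E →ₗ[𝕜] F)) := by
  have : FiniteDimensional 𝕜 F := Module.Finite.of_surjective (G₀ : E →ₗ[𝕜] F) hG₀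
  have hPG : Tendsto (fun x => (P x, G x)) l (𝓝 (P₀, G₀)) := hP.prodMk_nhds hG
  have hinj : ∀ᶠ x in l, Injective ((G x).prod (1 - P x)) :=
    hPG.eventually_mem <| isOpen_setOf_injective_prod_one_sub.mem_nhds <|
      injective_prod_one_sub_of_disjoint_range_ker h.disjoint
  have hsurj : ∀ᶠ x in l, Surjective (G x ∘L P x) :=
    hPG.eventually_mem <| isOpen_setOf_surjective_comp.mem_nhds <|
      (surjective_comp_iff_codisjoint_range_ker hG₀).2 h.codisjoint
  filter_upwards [hidem, hinj, hsurj] with x hidem_x hinj_x hsurj_x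
  exact isCompl_range_ker_of_injective_of_surjective hidem_x hinj_x hsurj_x

end Perturbation

section MatrixPerturbation

open Function Filter Topology LinearMap

variable {n k : Type*} [Fintype n] [DecidableEq n]

theorem surjective_toLin'_of_rank_eq_card {K : Type*} [Field K] [Fintype k] {G : Matrix k n K}
    (hG : G.rank = Fintype.card k) :
    Surjective (toLin' G) :=
  range_eq_top.1 <| Submodule.eq_top_of_finrank_eq <|
    hG.trans (Module.finrank_fintype_fun_eq_card K).symm

variable {𝕜 α : Type*} [NontriviallyNormedField 𝕜] [CompleteSpace 𝕜] {l : Filter α}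

theorem continuous_toContinuousLinearMap_toLin' [Finite k] :
    Continuous fun G : Matrix k n 𝕜 => toContinuousLinearMap (toLin' G) :=
  continuous_of_finiteDimensional
    (toLin' (m := k) (n := n) (R := 𝕜) ≪≫ₗ toContinuousLinearMap).toLinearMap

theorem eventually_isCompl_range_ker_toLin' [Fintype k]
    {P : α → Matrix n n 𝕜} {G : α → Matrix k n 𝕜} {P₀ : Matrix n n 𝕜} {G₀ : Matrix k n 𝕜}
    (hP : Tendsto P l (𝓝 P₀)) (hG : Tendsto G l (𝓝 G₀))
    (hidem : ∀ᶠ x in l, IsIdempotentElem (toLin' (P x))) (hG₀ : G₀.rank = Fintype.card k)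
    (h : IsCompl (range (toLin' P₀)) (ker (toLin' G₀))) :
    ∀ᶠ x in l, IsCompl (range (toLin' (P x))) (ker (toLin' (G x))) :=
  eventually_isCompl_range_ker
    ((continuous_toContinuousLinearMap_toLin'.tendsto P₀).comp hP)
    ((continuous_toContinuousLinearMap_toLin'.tendsto G₀).comp hG)
    hidem (surjective_toLin'_of_rank_eq_card hG₀) h

end MatrixPerturbation

section EvansCondition

open Filter Topology

variable {X : Type*} [TopologicalSpace X] {𝒪 : Set X}

theorem tendsto_comp_smul_of_continuousOn {V Y : Type*} [TopologicalSpace V] [AddCommGroup V]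
    [Module ℝ V] [ContinuousSMul ℝ V] [TopologicalSpace Y] (hO : IsOpen 𝒪) {f : X × V → Y}
    (hf : ContinuousOn f {x | x.1 ∈ 𝒪}) {p₀ : X} (hp₀ : p₀ ∈ 𝒪) (v₀ : V) :
    Tendsto (fun x : X × V × ℝ => f (x.1, x.2.2 • x.2.1)) (𝓝 (p₀, v₀, 0)) (𝓝 (f (p₀, 0))) := by
  have hsmul : Tendsto (fun x : X × V × ℝ => (x.1, x.2.2 • x.2.1)) (𝓝 (p₀, v₀, 0))
      (𝓝 (p₀, 0)) := by
    have hcont : Continuous fun x : X × V × ℝ => (x.1, x.2.2 • x.2.1) := by fun_prop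
    simpa only [zero_smul] using hcont.tendsto (p₀, v₀, 0)
  have hdomain : {x : X × V | x.1 ∈ 𝒪} ∈ 𝓝 (p₀, (0 : V)) :=
    (hO.preimage continuous_fst).mem_nhds hp₀
  exact (hf.continuousAt hdomain).tendsto.comp hsmul

theorem evans_condition_open_general {m : ℕ} {n k : Type*} [Fintype n] [DecidableEq n]
    [Fintype k] (hO : IsOpen 𝒪)
    (𝒢 : X → Freq m → Matrix n n ℂ) (Proj : X × Freq m × ℝ → Matrix n n ℂ)
    (hProjCont : ∀ i j, ContinuousOn (fun x => Proj x i j)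
      {x | x.1 ∈ 𝒪 ∧ x.2.1 ≠ 0 ∧ 0 ≤ x.2.1.2.2 ∧ 0 ≤ x.2.2})
    (hProj : ∀ p ∈ 𝒪, ∀ ζ : Freq m, ζ ≠ 0 → 0 ≤ ζ.2.2 → ∀ ρ : ℝ, 0 < ρ →
      IsIdempotentElem (toLin' (Proj (p, ζ, ρ))) ∧
      LinearMap.range (toLin' (Proj (p, ζ, ρ))) = stableSubspace (toLin' (𝒢 p (ρ • ζ))))
    (Γ : X × Freq m → Matrix k n ℂ)
    (hΓCont : ∀ i j, ContinuousOn (fun x => Γ x i j) {x | x.1 ∈ 𝒪})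
    {p₀ : X} (hp₀ : p₀ ∈ 𝒪) {ζ₀ : Freq m} (hζ₀ : ζ₀ ≠ 0) (hγ₀ : 0 ≤ ζ₀.2.2)
    (hΓrank : (Γ (p₀, 0)).rank = Fintype.card k)
    (htrans : IsCompl (LinearMap.range (toLin' (Proj (p₀, ζ₀, 0))))
      (LinearMap.ker (toLin' (Γ (p₀, 0))))) :
    ∃ Ω : Set (X × Freq m × ℝ), IsOpen Ω ∧ (p₀, ζ₀, (0 : ℝ)) ∈ Ω ∧ (∀ x ∈ Ω, x.1 ∈ 𝒪) ∧
      ∀ x ∈ Ω, 0 < x.2.2 → 0 ≤ x.2.1.2.2 →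
        IsCompl (stableSubspace (toLin' (𝒢 x.1 (x.2.2 • x.2.1))))
          (LinearMap.ker (toLin' (Γ (x.1, x.2.2 • x.2.1)))) := by
  let D : Set (X × Freq m × ℝ) := {x | x.1 ∈ 𝒪 ∧ x.2.1 ≠ 0 ∧ 0 ≤ x.2.1.2.2 ∧ 0 < x.2.2}
  have hProjLim : Tendsto Proj (𝓝[D] (p₀, ζ₀, 0)) (𝓝 (Proj (p₀, ζ₀, 0))) :=
    tendsto_pi_nhds.2 fun i => tendsto_pi_nhds.2 fun j =>
      (hProjCont i j (p₀, ζ₀, 0) ⟨hp₀, hζ₀, hγ₀, le_rfl⟩).mono_left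
        (nhdsWithin_mono _ fun _ ⟨hp, hζ, hγ, hρ⟩ => ⟨hp, hζ, hγ, hρ.le⟩)
  have hΓLim := tendsto_comp_smul_of_continuousOn hO
    (continuousOn_pi.2 fun i => continuousOn_pi.2 (hΓCont i)) hp₀ ζ₀
  have hcompl : ∀ᶠ x in 𝓝[D] (p₀, ζ₀, 0), IsCompl (LinearMap.range (toLin' (Proj x)))
      (LinearMap.ker (toLin' (Γ (x.1, x.2.2 • x.2.1)))) :=
    eventually_isCompl_range_ker_toLin' hProjLim (hΓLim.mono_left nhdsWithin_le_nhds)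
      (eventually_mem_nhdsWithin.mono fun x ⟨hp, hζ, hγ, hρ⟩ =>
        (hProj x.1 hp x.2.1 hζ hγ x.2.2 hρ).1)
      hΓrank htrans
  obtain ⟨U, hU, hmem, hUcompl⟩ := mem_nhdsWithin.1 hcompl
  refine ⟨U ∩ {x | x.1 ∈ 𝒪 ∧ x.2.1 ≠ 0}, hU.inter ?_, ⟨hmem, hp₀, hζ₀⟩, fun x hx => hx.2.1, ?_⟩
  · exact (hO.preimage continuous_fst).inter
      (isOpen_ne.preimage (continuous_fst.comp continuous_snd))
  · rintro ⟨p, ζ, ρ⟩ ⟨hx, hp, hζ⟩ hρ hγ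
    rw [← (hProj p hp ζ hζ hγ ρ hρ).2]
    exact hUcompl ⟨hx, hp, hζ, hγ, hρ⟩

end EvansCondition

/-- Openness of the uniform Evans/Lopatinski condition: if the continuous
extension of the stable bundle is transverse to `ker Γ` at a limiting point `(p̲, ζ̲̌, 0)`,
then `ℂ^{2N} = E₋(p, ρζ̌) ⊕ ker Γ(p, ρζ̌)` for all nearby `(p, ζ̌, ρ)` with `ρ > 0`,
`γ̌ ≥ 0`. -/
theorem evans_condition_open {M N m : ℕ} (𝒪 : Set (Fin M → ℝ)) (hO : IsOpen 𝒪)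
    (A : Fin (m + 1) → (Fin M → ℝ) → Matrix (Fin N) (Fin N) ℝ)
    (B : Fin (m + 1) → Fin (m + 1) → (Fin M → ℝ) → Matrix (Fin N) (Fin N) ℝ)
    (h0 : HypH0 𝒪 A B) (h1 : HypH1 𝒪 A) (h2 : HypH2 𝒪 A B) (h3 : HypH3 𝒪 A)
    (Proj : (Fin M → ℝ) × Freq m × ℝ → Matrix (Fin N ⊕ Fin N) (Fin N ⊕ Fin N) ℂ)
    (hProjCont : ∀ i j, ContinuousOn (fun x => Proj x i j)
      {x : (Fin M → ℝ) × Freq m × ℝ |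
        x.1 ∈ 𝒪 ∧ x.2.1 ≠ 0 ∧ 0 ≤ x.2.1.2.2 ∧ 0 ≤ x.2.2})
    (hProj : ∀ p ∈ 𝒪, ∀ ζ : Freq m, ζ ≠ 0 → 0 ≤ ζ.2.2 → ∀ ρ : ℝ, 0 < ρ →
      (Matrix.toLin' (Proj (p, ζ, ρ)) ∘ₗ Matrix.toLin' (Proj (p, ζ, ρ)) =
          Matrix.toLin' (Proj (p, ζ, ρ))) ∧
      LinearMap.range (Matrix.toLin' (Proj (p, ζ, ρ))) =
        stableSubspace (Matrix.toLin' (calG (fun j => A j p) (fun j k => B j k p) (ρ • ζ))) ∧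
      LinearMap.ker (Matrix.toLin' (Proj (p, ζ, ρ))) =
        unstableSubspace (Matrix.toLin' (calG (fun j => A j p) (fun j k => B j k p) (ρ • ζ))))
    (Γ : (Fin M → ℝ) × Freq m → Matrix (Fin N) (Fin N ⊕ Fin N) ℂ)
    (hΓCont : ∀ i j, ContinuousOn (fun x => Γ x i j)
      {x : (Fin M → ℝ) × Freq m | x.1 ∈ 𝒪})
    (hΓrank : ∀ x : (Fin M → ℝ) × Freq m, x.1 ∈ 𝒪 → (Γ x).rank = N)
    (p₀ : Fin M → ℝ) (hp₀ : p₀ ∈ 𝒪) (ζ₀ : Freq m) (hζ₀ : ζ₀ ≠ 0) (hγ₀ : 0 ≤ ζ₀.2.2)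
    (htrans : IsCompl (LinearMap.range (Matrix.toLin' (Proj (p₀, ζ₀, 0))))
      (LinearMap.ker (Matrix.toLin' (Γ (p₀, (0 : Freq m)))))) :
    ∃ Ω : Set ((Fin M → ℝ) × Freq m × ℝ), IsOpen Ω ∧ (p₀, ζ₀, (0 : ℝ)) ∈ Ω ∧
      (∀ x ∈ Ω, x.1 ∈ 𝒪) ∧
      ∀ x ∈ Ω, 0 < x.2.2 → 0 ≤ x.2.1.2.2 →
        IsCompl
          (stableSubspace
            (Matrix.toLin' (calG (fun j => A j x.1) (fun j k => B j k x.1) (x.2.2 • x.2.1))))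
          (LinearMap.ker (Matrix.toLin' (Γ (x.1, x.2.2 • x.2.1)))) := by
  exact evans_condition_open_general hO (fun p => calG (fun j => A j p) fun j k => B j k p) Proj
    hProjCont (fun p hp ζ hζ hγ ρ hρ => (hProj p hp ζ hζ hγ ρ hρ).imp_right And.left) Γ hΓCont
    hp₀ hζ₀ hγ₀ (by simpa using hΓrank (p₀, 0) hp₀) htrans

end
end
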